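/- Let Φ̊ ⊂ ℝⁿ be the root system of type BC_n (n ≥ 2), let (Λ_α) be an extension datum of type (Φ̊, Y) with common values Λ_s, Λ_ℓ, Λ_d on short, long, divisible roots, assume Λ_ℓ is an additive subgroup of Y (automatic for n ≥ 3), and let Φ^re be the associated set of real roots. Then Ψ ⊆ Φ^re is a maximal closed subroot system if and only if one of the following holds: (1) Ψ = Â_J for some subset J ⊊ {1, …, n} (possibly empty), where moreover J ≠ ∅ if Λ_s ≠ Λ_ℓ; (2) there is a maximal closed subroot system Ψ' of Φ^{B_n} whose gradient is a semi-closed subroot system of Φ̊_s ∪ Φ̊_ℓ such that Ψ = Ψ' ∪ {±2εᵢ ⊕ y : 1 ≤ i ≤ n, y ∈ Λ_d}; (3) there is a maximal closed subroot system Ψ' of Φ^{B_n} with Gr(Ψ') = Φ̊_s ∪ Φ̊_ℓ such that Ψ = Ψ' ∪ ⋃_{i=1}^{n} ({2εᵢ ⊕ y : y ∈ (Z_{εᵢ−εᵢ₊₁}(Ψ') + Z_{εᵢ+εᵢ₊₁}(Ψ')) ∩ Λ_d} ∪ {−2εᵢ ⊕ y : y ∈ (Z_{−εᵢ+εᵢ₊₁}(Ψ')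 + Z_{−εᵢ−εᵢ₊₁}(Ψ')) ∩ Λ_d}), where ε_{n+1} := ε₁. -/

import Mathlib

open scoped RealInnerProductSpace Pointwise

noncomputable section

namespace BdS

variable {V Y : Type*} [NormedAddCommGroup V] [InnerProductSpace ℝ V]
variable [AddCommGroup Y] [Module ℝ Y]

/-- `pairing β α = (β, α∨) = 2(β,α)/(α,α)`. -/
def pairing (β α : V) : ℝ := 2 * ⟪β, α⟫ / ⟪α, α⟫

/-- `reflRoot α v = s_α(v) = v − (v, α∨)α`. -/
def reflRoot (α v : V) : V := v - pairing v α • α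

/-- A (finite) root system in `V`. -/
def IsRootSystem (Φ : Set V) : Prop :=
  Φ.Finite ∧ (0 : V) ∉ Φ ∧ Submodule.span ℝ Φ = ⊤ ∧
    (∀ α ∈ Φ, ∀ β ∈ Φ, reflRoot α β ∈ Φ) ∧
    ∀ α ∈ Φ, ∀ β ∈ Φ, ∃ m : ℤ, pairing β α = (m : ℝ)

def IsReduced (Φ : Set V) : Prop :=
  ∀ α ∈ Φ, ∀ c : ℝ, c • α ∈ Φ → c • α = α ∨ c • α = -α

def IsIrreducible (Φ : Set V) : Prop :=
  ∀ Φ₁ Φ₂ : Set V, Φ = Φ₁ ∪ Φ₂ → (∀ x ∈ Φ₁, ∀ y ∈ Φ₂, ⟪x, y⟫ = 0) →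
    Φ₁ = ∅ ∨ Φ₂ = ∅

/-- divisible roots -/
def divSet (Φ : Set V) : Set V := {α ∈ Φ | (2:ℝ)⁻¹ • α ∈ Φ}
/-- non-divisible roots -/
def ndSet (Φ : Set V) : Set V := Φ \ divSet Φ
/-- short roots: non-divisible roots of non-maximal squared length -/
def shortSet (Φ : Set V) : Set V := {α ∈ ndSet Φ | ∃ β ∈ ndSet Φ, ⟪α, α⟫ < ⟪β, β⟫}
/-- long roots -/
def longSet (Φ : Set V) : Set V := ndSet Φ \ shortSet Φ

/-- An extension datum of type `(Φ, Y)`. -/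
def IsExtensionDatum (Φ : Set V) (Λ : V → Set Y) : Prop :=
  (∀ α ∈ Φ, ∀ β ∈ Φ, ∀ z ∈ Λ α, ∀ y ∈ Λ β, y - pairing β α • z ∈ Λ (reflRoot α β)) ∧
  (0 : Y) ∈ Λ 0 ∧
  (∀ α ∈ ndSet Φ, (0 : Y) ∈ Λ α) ∧
  (∀ α ∈ divSet Φ, (Λ α).Nonempty) ∧
  Submodule.span ℝ (⋃ α ∈ insert (0 : V) Φ, Λ α) = ⊤

/-- subroot system of a finite root system -/
def IsSubRS (Φ Δ : Set V) : Prop :=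
  Δ.Nonempty ∧ Δ ⊆ Φ ∧ ∀ α ∈ Δ, ∀ β ∈ Δ, reflRoot α β ∈ Δ

def IsClosedSubRS (Φ Δ : Set V) : Prop :=
  IsSubRS Φ Δ ∧ ∀ α ∈ Δ, ∀ β ∈ Δ, α + β ∈ Φ → α + β ∈ Δ

def IsMaxClosedSubRS (Φ Δ : Set V) : Prop :=
  IsClosedSubRS Φ Δ ∧ Δ ≠ Φ ∧
    ∀ Δ' : Set V, IsClosedSubRS Φ Δ' → Δ' ≠ Φ → Δ ⊆ Δ' → Δ' = Δ

/-- semi-closed subroot system, relative to given short/long/divisible parts -/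
def IsSemiClosedSubRS (Φ Φs Φl Φd Δ : Set V) : Prop :=
  IsSubRS Φ Δ ∧ ¬ (∀ α ∈ Δ, ∀ β ∈ Δ, α + β ∈ Φ → α + β ∈ Δ) ∧
    ∀ α ∈ Δ, ∀ β ∈ Δ, α + β ∈ Φ → α + β ∉ Δ →
      (α ∈ Φs ∧ β ∈ Φs ∧ α + β ∈ Φl ∪ Φd) ∨ (α ∈ Φl ∧ β ∈ Φl ∧ α + β ∈ Φd)

def IsMaxSemiClosedSubRS (Φ Φs Φl Φd Δ : Set V) : Prop :=
  IsSemiClosedSubRS Φ Φs Φl Φd Δ ∧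
    ∀ Δ' : Set V, IsClosedSubRS Φ Δ' → Δ' ≠ Φ → ¬ Δ ⊂ Δ'

/-- the set of real roots attached to an extension datum -/
def PhiRe (Φ : Set V) (Λ : V → Set Y) : Set (V × Y) := {x | x.1 ∈ Φ ∧ x.2 ∈ Λ x.1}

/-- affine reflection `s_{α ⊕ y}(β ⊕ z) = s_α(β) ⊕ (z − (β,α∨)y)` -/
def reflAff (a x : V × Y) : V × Y := (reflRoot a.1 x.1, x.2 - pairing x.1 a.1 • a.2)

/-- subroot system of a set of real roots `R` -/
def IsSubSys (R Ψ : Set (V × Y)) : Prop :=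
  Ψ.Nonempty ∧ Ψ ⊆ R ∧ Ψ ≠ R ∧ ∀ a ∈ Ψ, ∀ x ∈ Ψ, reflAff a x ∈ Ψ

def IsClosedSubSys (R Ψ : Set (V × Y)) : Prop :=
  IsSubSys R Ψ ∧ ∀ x ∈ Ψ, ∀ y ∈ Ψ, x + y ∈ R → x + y ∈ Ψ

def IsMaxClosedSubSys (R Ψ : Set (V × Y)) : Prop :=
  IsClosedSubSys R Ψ ∧ ∀ Ψ' : Set (V × Y), IsClosedSubSys R Ψ' → Ψ ⊆ Ψ' → Ψ' = Ψ

/-- gradient of a subroot system -/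
def Gr (Ψ : Set (V × Y)) : Set V := {α | ∃ y : Y, (α, y) ∈ Ψ}

def Zset (Ψ : Set (V × Y)) (α : V) : Set Y := {y | (α, y) ∈ Ψ}

abbrev E (n : ℕ) := EuclideanSpace ℝ (Fin n)

def eps {n : ℕ} (i : Fin n) : E n := EuclideanSpace.single i 1

def shortBC (n : ℕ) : Set (E n) := {v | ∃ i : Fin n, v = eps i ∨ v = -eps i}

def longBC (n : ℕ) : Set (E n) :=
  {v | ∃ i j : Fin n, i ≠ j ∧ ∃ c d : ℝ, (c = 1 ∨ c = -1) ∧ (d = 1 ∨ d = -1) ∧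
    v = c • eps i + d • eps j}

def divBC (n : ℕ) : Set (E n) :=
  {v | ∃ i : Fin n, v = (2:ℝ) • eps i ∨ v = -((2:ℝ) • eps i)}

def BCn (n : ℕ) : Set (E n) := shortBC n ∪ longBC n ∪ divBC n
def Bn (n : ℕ) : Set (E n) := shortBC n ∪ longBC n
def Cn (n : ℕ) : Set (E n) := longBC n ∪ divBC n

/-- the closed subroot system `A_J` of `BC_n`. -/
def AJ (n : ℕ) (J : Set (Fin n)) : Set (E n) :=
  divBC n ∪ {v | ∃ j ∈ J, v = eps j ∨ v = -eps j} ∪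
    {v | ∃ r s : Fin n, r ≠ s ∧ ((r ∈ J ∧ s ∈ J) ∨ (r ∉ J ∧ s ∉ J)) ∧
      ∃ c d : ℝ, (c = 1 ∨ c = -1) ∧ (d = 1 ∨ d = -1) ∧ v = c • eps r + d • eps s}

/-- the cyclic successor `i ↦ i+1` on `Fin n` (with `ε_{n+1} = ε_1`). -/
def nextIdx {n : ℕ} (i : Fin n) : Fin n := ⟨((i : ℕ) + 1) % n, Nat.mod_lt _ i.pos⟩

/-!
Write every root as `ε p` or `ε p + ε q` with signed indices `p` and `q`, and let `Ψ` be closed. If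
some `ε p` is not a gradient of `Ψ`, then `Ψ` lies in a lift `Â_J`, where `J` is the set of indices
of the short gradients.

If all short roots are gradients but `ε p + ε q` is not, give the translations of `ε p` the first
colour, which depends only on their classes modulo `Λ_ℓ`, and give an index the first colour if one
of its translations has it. Then `q` has the second colour, and `Ψ` consists of short roots whose
index and translation have the same colour and of long and divisible roots joining indices of the
same colour. The system of all such roots contains every divisible root, and it is maximal because
any further root yields one joining two colours, which generates everything.

If all short and long roots are gradients, then `Ψ` lies in the largest closed extension of its part
of type `B_n` by divisible roots. For a short root `α`, a translation `d` of `2α` occurs in this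
extension exactly when `y ↦ d - y` preserves the translations of `α`; because `ε p` is the sum of
`ε p + ε r` and `-ε r`, this means that `d` is a sum of translations of `ε p + ε r` and
`ε p - ε r`.
-/

/-- A signed index `±i`, standing for the short root `±εᵢ`. The roots of type `BC_n` are the `ε p`
and the `ε p + ε q` for signed indices `p` and `q ≠ -p`; the divisible ones are the `ε p + ε p`. -/
@[ext]
structure SignedIndex (n : ℕ) where
  index : Fin n
  sign : ℤˣ
deriving DecidableEq

namespace SignedIndex

variable {n : ℕ} {p q : SignedIndex n}

instance : InvolutiveNeg (SignedIndex n) where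
  neg p := ⟨p.index, -p.sign⟩
  neg_neg p := by ext <;> simp only [neg_neg]

@[simp] lemma index_neg (p : SignedIndex n) : (-p).index = p.index := rfl

@[simp] lemma sign_neg (p : SignedIndex n) : (-p).sign = -p.sign := rfl

lemma ne_neg_self (p : SignedIndex n) : p ≠ -p := fun h ↦
  units_ne_neg_self p.sign (congrArg sign h)

lemma index_eq_iff : p.index = q.index ↔ p = q ∨ p = -q := by
  refine ⟨fun h ↦ ?_, by rintro (rfl | rfl) <;> simp⟩
  rcases Int.units_eq_one_or p.sign with hp | hp <;>
    rcases Int.units_eq_one_or q.sign with hq | hq <;>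
    simp [SignedIndex.ext_iff, h, hp, hq]

lemma index_ne_iff : p.index ≠ q.index ↔ q ≠ p ∧ q ≠ -p := by
  rw [Ne, index_eq_iff, not_or, ← neg_eq_iff_eq_neg, eq_comm, eq_comm (a := -p)]

lemma exists_index_ne (hn : 2 ≤ n) (p : SignedIndex n) : ∃ q : SignedIndex n, q ≠ p ∧ q ≠ -p := by
  have := Fin.nontrivial_iff_two_le.2 hn
  obtain ⟨j, hj⟩ := exists_ne p.index
  exact ⟨⟨j, 1⟩, index_ne_iff.1 hj.symm⟩

end SignedIndex

section SignedBasis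

variable {n : ℕ} {p q r s : SignedIndex n}

/-- The short root `±εᵢ` attached to the signed index `±i`. -/
def ε (p : SignedIndex n) : E n := p.sign • eps p.index

@[simp] lemma ε_neg (p : SignedIndex n) : ε (-p) = -ε p := by simp [ε]

lemma inner_ε (p q : SignedIndex n) :
    ⟪ε p, ε q⟫ = (if p = q then 1 else 0) - (if p = -q then 1 else 0) := by
  obtain ⟨i, a⟩ := p
  obtain ⟨j, b⟩ := q
  by_cases h : i = j <;> rcases Int.units_eq_one_or a with rfl | rfl <;>
    rcases Int.units_eq_one_or b with rfl | rfl <;>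
    simp [ε, eps, SignedIndex.ext_iff, Units.smul_def, EuclideanSpace.inner_single_left, h]

lemma inner_ε_self (p : SignedIndex n) : ⟪ε p, ε p⟫ = 1 := by
  rw [inner_ε, if_pos rfl, if_neg p.ne_neg_self, sub_zero]

lemma inner_ε_eq_zero (h : q ≠ p) (h' : q ≠ -p) : ⟪ε q, ε p⟫ = 0 := by
  simp [inner_ε, h, h']

lemma inner_sum_ε (s : Multiset (SignedIndex n)) (p : SignedIndex n) :
    ⟪(s.map ε).sum, ε p⟫ = (s.count p : ℝ) - s.count (-p) := by
  induction s using Multiset.induction with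
  | empty => simp
  | cons q s ih =>
    rw [Multiset.map_cons, Multiset.sum_cons, inner_add_left, ih, inner_ε]
    simp only [Multiset.count_cons, eq_comm (a := q), Nat.cast_add, Nat.cast_ite, Nat.cast_one,
      Nat.cast_zero]
    simp only [neg_eq_iff_eq_neg]
    ring

/-- A multiset of signed indices, read as the sum of the corresponding `ε p`, is reduced if no two
of its terms cancel. -/
def IsReducedSum (s : Multiset (SignedIndex n)) : Prop := ∀ p ∈ s, -p ∉ s

lemma isReducedSum_singleton (p : SignedIndex n) : IsReducedSum {p} := by
  simpa [IsReducedSum] using p.ne_neg_self.symm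

lemma isReducedSum_cons {m : Multiset (SignedIndex n)} :
    IsReducedSum (p ::ₘ m) ↔ -p ∉ m ∧ IsReducedSum m := by
  have hp := p.ne_neg_self
  simp only [IsReducedSum, Multiset.mem_cons]
  grind [neg_neg]

lemma isReducedSum_pair : IsReducedSum {p, q} ↔ q ≠ -p := by
  simp [Multiset.insert_eq_cons, isReducedSum_cons, isReducedSum_singleton, eq_comm]

-- The multiplicity of `p` in a reduced sum is read off from the inner product with `ε p`.
lemma IsReducedSum.eq_of_sum_eq {s t : Multiset (SignedIndex n)} (hs : IsReducedSum s)
    (ht : IsReducedSum t) (h : (s.map ε).sum = (t.map ε).sum) : s = t := by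
  ext p
  have hp := congrArg (⟪·, ε p⟫) h
  simp only [inner_sum_ε] at hp
  have count_eq_zero {u : Multiset (SignedIndex n)} (hu : IsReducedSum u) :
      u.count p = 0 ∨ u.count (-p) = 0 := by
    simpa only [Multiset.count_eq_zero, ← not_and_or, not_and, not_not] using hu p
  have hs := count_eq_zero hs
  have ht := count_eq_zero ht
  have : s.count p + t.count (-p) = t.count p + s.count (-p) := by
    exact_mod_cast (by linarith : (s.count p : ℝ) + t.count (-p) = t.count p + s.count (-p))
  lia

lemma ε_injective : Function.Injective (ε : SignedIndex n → E n) := fun p q h ↦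
  Multiset.singleton_inj.1 <|
    (isReducedSum_singleton p).eq_of_sum_eq (isReducedSum_singleton q) (by simpa using h)

lemma ε_add_ε_ne_ε (h : q ≠ -p) : ε p + ε q ≠ ε r := fun he ↦ by
  simpa using congrArg Multiset.card <|
    (isReducedSum_pair.2 h).eq_of_sum_eq (isReducedSum_singleton r) (by simpa using he)

lemma ε_add_ε_eq_iff (h : q ≠ -p) (h' : s ≠ -r) :
    ε p + ε q = ε r + ε s ↔ (p = r ∧ q = s) ∨ (p = s ∧ q = r) := by
  refine ⟨fun he ↦ ?_, by rintro (⟨rfl, rfl⟩ | ⟨rfl, rfl⟩) <;> simp [add_comm]⟩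
  have := (isReducedSum_pair.2 h).eq_of_sum_eq (isReducedSum_pair.2 h') (by simpa using he)
  simp only [Multiset.insert_eq_cons, Multiset.cons_eq_cons, Multiset.singleton_inj,
    Multiset.singleton_eq_cons_iff] at this
  grind

end SignedBasis

/-! ### The roots in terms of signed indices -/

section Roots

variable {n : ℕ} {p q r s : SignedIndex n} {v : E n} {J : Set (Fin n)}

lemma exists_ε_iff {P : Fin n → E n → Prop} :
    (∃ p : SignedIndex n, P p.index (ε p)) ↔ ∃ i, P i (eps i) ∨ P i (-eps i) := by
  constructor
  · rintro ⟨⟨i, a⟩, h⟩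
    rcases Int.units_eq_one_or a with rfl | rfl
    · exact ⟨i, .inl (by simpa [ε] using h)⟩
    · exact ⟨i, .inr (by simpa [ε] using h)⟩
  · rintro ⟨i, h | h⟩
    · exact ⟨⟨i, 1⟩, by simpa [ε] using h⟩
    · exact ⟨⟨i, -1⟩, by simpa [ε] using h⟩

lemma exists_ε_add_ε_iff {R : Fin n → Fin n → Prop} :
    (∃ p q : SignedIndex n, R p.index q.index ∧ v = ε p + ε q) ↔
      ∃ i j, R i j ∧ ∃ c d : ℝ, (c = 1 ∨ c = -1) ∧ (d = 1 ∨ d = -1) ∧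
        v = c • eps i + d • eps j := by
  have sign (a : ℤˣ) : ((a : ℤ) : ℝ) = 1 ∨ ((a : ℤ) : ℝ) = -1 := by
    rcases Int.units_eq_one_or a with rfl | rfl <;> simp
  constructor
  · rintro ⟨p, q, hR, rfl⟩
    exact ⟨p.index, q.index, hR, _, _, sign p.sign, sign q.sign, by
      simp [ε, Units.smul_def, Int.cast_smul_eq_zsmul]⟩
  · rintro ⟨i, j, hR, _, _, rfl | rfl, rfl | rfl, rfl⟩
    exacts [⟨⟨i, 1⟩, ⟨j, 1⟩, hR, by simp [ε]⟩, ⟨⟨i, 1⟩, ⟨j, -1⟩, hR, by simp [ε]⟩,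
      ⟨⟨i, -1⟩, ⟨j, 1⟩, hR, by simp [ε]⟩, ⟨⟨i, -1⟩, ⟨j, -1⟩, hR, by simp [ε]⟩]

lemma mem_shortBC : v ∈ shortBC n ↔ ∃ p, v = ε p :=
  (exists_ε_iff (P := fun _ w ↦ v = w)).symm

lemma mem_divBC : v ∈ divBC n ↔ ∃ p, v = ε p + ε p := by
  rw [exists_ε_iff (P := fun _ w ↦ v = w + w)]
  simp [divBC, two_smul]

lemma mem_longBC : v ∈ longBC n ↔ ∃ p q, (q ≠ p ∧ q ≠ -p) ∧ v = ε p + ε q := by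
  simp only [← SignedIndex.index_ne_iff]
  exact exists_ε_add_ε_iff.symm

lemma mem_AJ : v ∈ AJ n J ↔ (∃ p, v = ε p ∧ p.index ∈ J) ∨
    ∃ p q, q ≠ -p ∧ v = ε p + ε q ∧ (p.index ∈ J ↔ q.index ∈ J) := by
  have hshort : v ∈ {v | ∃ j ∈ J, v = eps j ∨ v = -eps j} ↔ ∃ p, v = ε p ∧ p.index ∈ J := by
    rw [exists_ε_iff (P := fun i w ↦ v = w ∧ i ∈ J)]
    simp only [Set.mem_ofPred_eq, and_comm (b := _ ∈ J), ← and_or_left]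
  have hlong : v ∈ {v | ∃ r s : Fin n, r ≠ s ∧ ((r ∈ J ∧ s ∈ J) ∨ (r ∉ J ∧ s ∉ J)) ∧
      ∃ c d : ℝ, (c = 1 ∨ c = -1) ∧ (d = 1 ∨ d = -1) ∧ v = c • eps r + d • eps s} ↔
      ∃ p q : SignedIndex n, (p.index ≠ q.index ∧ (p.index ∈ J ↔ q.index ∈ J)) ∧
        v = ε p + ε q := by
    rw [exists_ε_add_ε_iff (R := fun i j ↦ i ≠ j ∧ (i ∈ J ↔ j ∈ J))]
    simp only [← iff_iff_and_or_not_and_not, Set.mem_ofPred_eq, and_assoc]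
  rw [AJ, Set.mem_union, Set.mem_union, hshort, hlong, mem_divBC, or_assoc, or_left_comm]
  simp only [SignedIndex.index_ne_iff]
  refine or_congr_right ⟨?_, ?_⟩
  · rintro (⟨p, rfl⟩ | ⟨p, q, ⟨⟨-, hq⟩, hJ⟩, rfl⟩)
    · exact ⟨p, p, p.ne_neg_self, rfl, Iff.rfl⟩
    · exact ⟨p, q, hq, rfl, hJ⟩
  · rintro ⟨p, q, hq, rfl, hJ⟩
    by_cases h : q = p
    · exact .inl ⟨p, by rw [h]⟩
    · exact .inr ⟨p, q, ⟨⟨h, hq⟩, hJ⟩, rfl⟩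

lemma AJ_univ (n : ℕ) : AJ n Set.univ = BCn n := by
  ext v
  simp only [AJ, BCn, shortBC, longBC, Set.mem_union, Set.mem_ofPred_eq, Set.mem_univ, true_and,
    not_true_eq_false, and_false, or_false]
  exact or_assoc.trans or_comm

lemma mem_BCn : v ∈ BCn n ↔ (∃ p, v = ε p) ∨ ∃ p q, q ≠ -p ∧ v = ε p + ε q := by
  simp [← AJ_univ, mem_AJ]

lemma mem_Bn : v ∈ Bn n ↔ (∃ p, v = ε p) ∨ ∃ p q, (q ≠ p ∧ q ≠ -p) ∧ v = ε p + ε q := by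
  rw [Bn, Set.mem_union, mem_shortBC, mem_longBC]

@[simp] lemma ε_mem_BCn (p : SignedIndex n) : ε p ∈ BCn n := mem_BCn.2 (.inl ⟨p, rfl⟩)

lemma ε_add_ε_mem_BCn (h : q ≠ -p) : ε p + ε q ∈ BCn n := mem_BCn.2 (.inr ⟨p, q, h, rfl⟩)

lemma IsReducedSum.card_of_sum_mem_BCn {m : Multiset (SignedIndex n)} (hm : IsReducedSum m)
    (h : (m.map ε).sum ∈ BCn n) : m.card = 1 ∨ m.card = 2 := by
  rcases mem_BCn.1 h with ⟨p, hp⟩ | ⟨p, q, hq, hpq⟩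
  · exact .inl (by rw [hm.eq_of_sum_eq (isReducedSum_singleton p) (by simpa using hp)]; rfl)
  · exact .inr (by rw [hm.eq_of_sum_eq (isReducedSum_pair.2 hq) (by simpa using hpq)]; rfl)

lemma zero_notMem_BCn : (0 : E n) ∉ BCn n := fun h ↦ by
  have : IsReducedSum (0 : Multiset (SignedIndex n)) := by simp [IsReducedSum]
  simpa using this.card_of_sum_mem_BCn (by simpa using h)

lemma ε_add_ε_mem_longBC : ε p + ε q ∈ longBC n ↔ q ≠ p ∧ q ≠ -p := by
  refine ⟨fun h ↦ ?_, fun h ↦ mem_longBC.2 ⟨p, q, h, rfl⟩⟩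
  obtain ⟨r, s, hrs, hsum⟩ := mem_longBC.1 h
  have hq : q ≠ -p := by
    rintro rfl
    exact zero_notMem_BCn (n := n) (by simpa [← hsum] using ε_add_ε_mem_BCn hrs.2)
  obtain ⟨rfl, rfl⟩ | ⟨rfl, rfl⟩ := (ε_add_ε_eq_iff hq hrs.2).1 hsum
  exacts [hrs, ⟨hrs.1.symm, hq⟩]

lemma cancel_of_add_ε_mem_BCn (h : q ≠ -p) (hsum : ε p + ε q + ε r ∈ BCn n) :
    r = -p ∨ r = -q := by
  by_contra! hr
  have : IsReducedSum {p, q, r} := by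
    simp only [Multiset.insert_eq_cons, isReducedSum_cons, isReducedSum_singleton]
    simp [h.symm, hr.1.symm, hr.2.symm]
  simpa using this.card_of_sum_mem_BCn (by simpa [add_assoc] using hsum)

lemma cancel_of_add_add_mem_BCn (h : q ≠ -p) (h' : s ≠ -r)
    (hsum : ε p + ε q + (ε r + ε s) ∈ BCn n) : r = -p ∨ r = -q ∨ s = -p ∨ s = -q := by
  by_contra! hrs
  have : IsReducedSum {p, q, r, s} := by
    simp only [Multiset.insert_eq_cons, isReducedSum_cons, isReducedSum_singleton]
    simp [h.symm, h'.symm, hrs.1.symm, hrs.2.1.symm, hrs.2.2.1.symm, hrs.2.2.2.symm]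
  simpa using this.card_of_sum_mem_BCn (by simpa [add_assoc] using hsum)

end Roots

/-! ### Pairings and affine reflections -/

section Pairing

variable {n : ℕ} {p q r : SignedIndex n}

lemma pairing_add_left (u v α : V) : pairing (u + v) α = pairing u α + pairing v α := by
  simp only [pairing, inner_add_left]
  ring

lemma pairing_neg_left (v α : V) : pairing (-v) α = -pairing v α := by
  simp only [pairing, inner_neg_left]
  ring

lemma pairing_neg_right (v α : V) : pairing v (-α) = -pairing v α := by
  simp only [pairing, inner_neg_right, inner_neg_left, neg_neg]
  ring

lemma pairing_self {α : V} (h : α ≠ 0) : pairing α α = 2 := by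
  rw [pairing, mul_div_assoc, div_self (inner_self_ne_zero.2 h), mul_one]

lemma pairing_ε (v : E n) (p : SignedIndex n) : pairing v (ε p) = 2 * ⟪v, ε p⟫ := by
  rw [pairing, inner_ε_self, div_one]

lemma pairing_ε_add_of_ne (h₁ : r ≠ p) (h₂ : r ≠ -p) (h₃ : r ≠ q) (h₄ : r ≠ -q) :
    pairing (ε r) (ε p + ε q) = 0 := by
  rw [pairing, inner_add_right, inner_ε_eq_zero h₁ h₂, inner_ε_eq_zero h₃ h₄]
  simp

lemma pairing_ε_add_ε_left (h : q ≠ p ∧ q ≠ -p) : pairing (ε p + ε q) (ε p) = 2 := by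
  rw [pairing_ε, inner_add_left, inner_ε_self, inner_ε_eq_zero h.1 h.2, add_zero, mul_one]

lemma pairing_ε_add_left (h : q ≠ -p) : pairing (ε p) (ε p + ε q) = 1 := by
  have hpq : p ≠ -q := fun hp ↦ h (neg_eq_iff_eq_neg.1 hp.symm)
  have hne : 1 + ⟪ε p, ε q⟫ ≠ 0 := by
    rw [inner_ε, if_neg hpq]
    split_ifs <;> norm_num
  rw [pairing, inner_add_right, real_inner_add_add_self, inner_ε_self, inner_ε_self,
    show 1 + 2 * ⟪ε p, ε q⟫ + 1 = 2 * (1 + ⟪ε p, ε q⟫) by ring]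
  exact div_self (mul_ne_zero two_ne_zero hne)

lemma pairing_ε_add_self_left (h : q ≠ -p) : pairing (ε p + ε p) (ε p + ε q) = 2 := by
  rw [pairing_add_left, pairing_ε_add_left h, one_add_one_eq_two]

lemma pairing_ε_add_self_right (h : q ≠ p ∧ q ≠ -p) : pairing (ε p + ε q) (ε p + ε p) = 1 := by
  rw [pairing_add_left, pairing_ε_add_left p.ne_neg_self,
    pairing_ε_add_of_ne h.1 h.2 h.1 h.2, add_zero]

lemma reflAff_eq_sub (a x : V × Y) : reflAff a x = x - pairing x.1 a.1 • a := rfl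

lemma reflAff_eq_self {a x : V × Y} (h : pairing x.1 a.1 = 0) : reflAff a x = x := by
  rw [reflAff_eq_sub, h, zero_smul, sub_zero]

lemma reflAff_neg_left (a x : V × Y) : reflAff (-a) x = reflAff a x := by
  rw [reflAff_eq_sub, reflAff_eq_sub, Prod.fst_neg, pairing_neg_right, neg_smul_neg]

lemma reflAff_neg_right (a x : V × Y) : reflAff a (-x) = -reflAff a x := by
  rw [reflAff_eq_sub, reflAff_eq_sub, Prod.fst_neg, pairing_neg_left]
  module

end Pairing

/-! ### Data of type `BC` and their closed subsystems -/

/-- The translation sets `Λ_s`, `Λ_ℓ`, `Λ_d` of an extension datum of type `BC_n`, with the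
relations between them that the classification needs. The datum of the subsystem of type `B_n` is
the case `div = ∅`. -/
structure BCDatum (G : Type*) [AddCommGroup G] where
  short : Set G
  long : AddSubgroup G
  div : Set G
  zero_mem_short : 0 ∈ short
  add_mem_short {y l : G} : y ∈ short → l ∈ long → y + l ∈ short
  two_nsmul_mem_long {y : G} : y ∈ short → 2 • y ∈ long
  div_subset_long : div ⊆ long
  sub_two_nsmul_mem_div {d l : G} : d ∈ div → l ∈ long → d - 2 • l ∈ div

namespace BCDatum

variable {G : Type*} [AddCommGroup G] (D : BCDatum G) {n : ℕ} {p q r : SignedIndex n}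
  {y z l d : G} {I : Set (Fin n)} {P : Set (G ⧸ D.long)} {Ψ : Set (E n × G)} {x : E n × G}

lemma mem_long_of_mem_div (hd : d ∈ D.div) : d ∈ D.long := D.div_subset_long hd

lemma mem_short_of_mem_long (hl : l ∈ D.long) : l ∈ D.short := by
  simpa using D.add_mem_short D.zero_mem_short hl

lemma add_mem_long_of_mk_eq (hz : z ∈ D.short) (h : (y : G ⧸ D.long) = z) : y + z ∈ D.long := by
  have := D.long.add_mem (D.long.neg_mem (QuotientAddGroup.eq.1 h)) (D.two_nsmul_mem_long hz)
  convert this using 1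
  abel

lemma mk_neg_eq (hy : y ∈ D.short) : ((-y : G) : G ⧸ D.long) = y := by
  rw [QuotientAddGroup.eq, neg_neg, ← two_nsmul]
  exact D.two_nsmul_mem_long hy

lemma neg_mem_short (hy : y ∈ D.short) : -y ∈ D.short := by
  convert D.add_mem_short hy (D.long.neg_mem (D.two_nsmul_mem_long hy)) using 1
  abel

lemma neg_mem_div (hd : d ∈ D.div) : -d ∈ D.div := by
  convert D.sub_two_nsmul_mem_div hd (D.mem_long_of_mem_div hd) using 1
  abel

lemma two_nsmul_sub_mem_div (hl : l ∈ D.long) (hd : d ∈ D.div) : 2 • l - d ∈ D.div := by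
  simpa using D.neg_mem_div (D.sub_two_nsmul_mem_div hd hl)

/-- The set of real roots with translations in `D`: this is `Φ^re`, see
`HasCommonValues.PhiRe_BCn_eq`. -/
def roots (n : ℕ) : Set (E n × G) :=
  {x | (∃ p, x.1 = ε p ∧ x.2 ∈ D.short) ∨
    ∃ p q, q ≠ -p ∧ x.1 = ε p + ε q ∧ x.2 ∈ D.long ∧ (p = q → x.2 ∈ D.div)}

/-- The system of real roots obtained from a colouring: the indices in `I` have the first colour,
and so have the classes in `P` modulo long translations. It contains the short roots whose index
and translation have the same colour, and the long and divisible roots whose two indices have the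
same colour. -/
def colored (I : Set (Fin n)) (P : Set (G ⧸ D.long)) : Set (E n × G) :=
  {x | (∃ p, x.1 = ε p ∧ x.2 ∈ D.short ∧ ((x.2 : G ⧸ D.long) ∈ P ↔ p.index ∈ I)) ∨
    ∃ p q, q ≠ -p ∧ x.1 = ε p + ε q ∧ (x.2 ∈ D.long ∧ (p = q → x.2 ∈ D.div)) ∧
      (p.index ∈ I ↔ q.index ∈ I)}

lemma colored_univ_univ : D.colored (Set.univ : Set (Fin n)) Set.univ = D.roots n := by
  simp [colored, roots]

lemma ε_mem_colored :
    (ε p, y) ∈ D.colored I P ↔ y ∈ D.short ∧ ((y : G ⧸ D.long) ∈ P ↔ p.index ∈ I) := by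
  constructor
  · rintro (⟨r, hr, h⟩ | ⟨r, s, hs, hrs, -⟩)
    · rwa [ε_injective hr]
    · exact (ε_add_ε_ne_ε hs hrs.symm).elim
  · exact fun h ↦ .inl ⟨p, rfl, h⟩

lemma ε_add_mem_colored :
    (ε p + ε q, y) ∈ D.colored I P ↔
      q ≠ -p ∧ (y ∈ D.long ∧ (p = q → y ∈ D.div)) ∧ (p.index ∈ I ↔ q.index ∈ I) := by
  constructor
  · rintro (⟨r, hr, -⟩ | ⟨r, s, hs, hrs, h⟩)
    · have hq : q ≠ -p := by
        rintro rfl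
        exact zero_notMem_BCn (n := n) (by simpa [← hr] using ε_mem_BCn r)
      exact (ε_add_ε_ne_ε hq hr).elim
    · have hq : q ≠ -p := by
        rintro rfl
        exact zero_notMem_BCn (n := n) (by simpa [← hrs] using ε_add_ε_mem_BCn hs)
      obtain ⟨rfl, rfl⟩ | ⟨rfl, rfl⟩ := (ε_add_ε_eq_iff hq hs).1 hrs
      · exact ⟨hq, h⟩
      · exact ⟨hq, ⟨h.1.1, fun hpq ↦ h.1.2 hpq.symm⟩, h.2.symm⟩
  · exact fun ⟨hq, h⟩ ↦ .inr ⟨p, q, hq, rfl, h⟩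

@[simp] lemma ε_mem_roots : (ε p, y) ∈ D.roots n ↔ y ∈ D.short := by
  simp [← colored_univ_univ, ε_mem_colored]

@[simp] lemma ε_add_mem_roots :
    (ε p + ε q, y) ∈ D.roots n ↔ q ≠ -p ∧ y ∈ D.long ∧ (p = q → y ∈ D.div) := by
  simp [← colored_univ_univ, ε_add_mem_colored]

lemma add_mem_roots_of_ne (hpq : q ≠ p ∧ q ≠ -p) (hl : l ∈ D.long) :
    (ε p + ε q, l) ∈ D.roots n :=
  D.ε_add_mem_roots.2 ⟨hpq.2, hl, fun h ↦ (hpq.1 h.symm).elim⟩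

lemma fst_mem_BCn_of_mem_roots (h : x ∈ D.roots n) : x.1 ∈ BCn n := by
  obtain ⟨p, h, -⟩ | ⟨p, q, hq, h, -⟩ := h
  exacts [h ▸ ε_mem_BCn p, h ▸ ε_add_ε_mem_BCn hq]

/-- The coordinate form of being closed under the reflections and sums in `D.roots n`, see
`isClosedSystem_iff`. Reflections not listed here are iterated sums. -/
structure IsClosedSystem (Ψ : Set (E n × G)) : Prop where
  subset : Ψ ⊆ D.roots n
  neg_mem : ∀ x ∈ Ψ, -x ∈ Ψ
  refl_mem : ∀ v y z, (v, y) ∈ Ψ → (v, z) ∈ Ψ → (v, 2 • y - z) ∈ Ψ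
  refl_double_mem : ∀ p y d, (ε p, y) ∈ Ψ → (ε p + ε p, d) ∈ Ψ → (ε p + ε p, 4 • y - d) ∈ Ψ
  add_mem : ∀ x ∈ Ψ, ∀ y ∈ Ψ, x + y ∈ D.roots n → x + y ∈ Ψ

lemma eq_of_mem_roots (h : x ∈ D.roots n) :
    (∃ p y, x = (ε p, y)) ∨ ∃ p q y, x = (ε p + ε q, y) := by
  obtain ⟨v, y⟩ := x
  obtain ⟨p, rfl, -⟩ | ⟨p, q, -, rfl, -⟩ := h
  exacts [.inl ⟨p, y, rfl⟩, .inr ⟨p, q, y, rfl⟩]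

namespace IsClosedSystem

variable {D}

lemma mem_short (C : D.IsClosedSystem Ψ) (h : (ε p, y) ∈ Ψ) : y ∈ D.short :=
  D.ε_mem_roots.1 (C.subset h)

lemma ne_neg (C : D.IsClosedSystem Ψ) (h : (ε p + ε q, y) ∈ Ψ) : q ≠ -p :=
  (D.ε_add_mem_roots.1 (C.subset h)).1

lemma mem_long (C : D.IsClosedSystem Ψ) (h : (ε p + ε q, y) ∈ Ψ) : y ∈ D.long :=
  (D.ε_add_mem_roots.1 (C.subset h)).2.1

lemma mem_div (C : D.IsClosedSystem Ψ) (h : (ε p + ε p, d) ∈ Ψ) : d ∈ D.div :=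
  (D.ε_add_mem_roots.1 (C.subset h)).2.2 rfl

lemma neg_short (C : D.IsClosedSystem Ψ) (h : (ε p, y) ∈ Ψ) : (ε (-p), -y) ∈ Ψ := by
  simpa using C.neg_mem _ h

lemma neg_add (C : D.IsClosedSystem Ψ) (h : (ε p + ε q, y) ∈ Ψ) :
    (ε (-p) + ε (-q), -y) ∈ Ψ := by
  simpa [add_comm] using C.neg_mem _ h

lemma short_add_short (C : D.IsClosedSystem Ψ) (hp : (ε p, y) ∈ Ψ) (hq : (ε q, z) ∈ Ψ)
    (hpq : q ≠ -p) (hl : y + z ∈ D.long) (hd : p = q → y + z ∈ D.div) :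
    (ε p + ε q, y + z) ∈ Ψ :=
  C.add_mem _ hp _ hq (D.ε_add_mem_roots.2 ⟨hpq, hl, hd⟩)

lemma add_sub_short (C : D.IsClosedSystem Ψ) (hpq : (ε p + ε q, y) ∈ Ψ) (hq : (ε q, z) ∈ Ψ) :
    (ε p, y - z) ∈ Ψ := by
  have h : (ε p + ε q, y) + (-(ε q, z)) = (ε p, y - z) := by
    ext1 <;> simp [sub_eq_add_neg]
  rw [← h]
  refine C.add_mem _ hpq _ (C.neg_mem _ hq) (h ▸ D.ε_mem_roots.2 ?_)
  rw [sub_eq_add_neg, add_comm]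
  exact D.add_mem_short (D.neg_mem_short (C.mem_short hq)) (C.mem_long hpq)

lemma add_add_add (C : D.IsClosedSystem Ψ) (hpq : (ε p + ε q, y) ∈ Ψ)
    (hqr : (ε (-q) + ε r, z) ∈ Ψ) (hpr : r ≠ -p) (hd : p = r → y + z ∈ D.div) :
    (ε p + ε r, y + z) ∈ Ψ := by
  have h : (ε p + ε q, y) + (ε (-q) + ε r, z) = (ε p + ε r, y + z) := by
    ext1 <;> simp
  rw [← h]
  exact C.add_mem _ hpq _ hqr
    (h ▸ D.ε_add_mem_roots.2 ⟨hpr, D.long.add_mem (C.mem_long hpq) (C.mem_long hqr), hd⟩)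

lemma exists_mem_add_left (C : D.IsClosedSystem Ψ) (h : (ε p + ε q, y) ∈ Ψ)
    (hr : r = p ∨ r = -p ∨ r = q ∨ r = -q) :
    ∃ u z, (ε r + ε u, z) ∈ Ψ ∧
      ((ε p + ε q, y) = (ε r + ε u, z) ∨ (ε p + ε q, y) = -(ε r + ε u, z)) := by
  obtain rfl | rfl | rfl | rfl := hr
  · exact ⟨q, y, h, .inl rfl⟩
  · exact ⟨-q, -y, C.neg_add h, .inr (by ext1 <;> simp [add_comm])⟩
  · exact ⟨p, y, add_comm (ε p) (ε r) ▸ h, .inl (by rw [add_comm])⟩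
  · exact ⟨-p, -y, add_comm (ε (-p)) (ε (-q)) ▸ C.neg_add h, .inr (by ext1 <;> simp)⟩

end IsClosedSystem

/-- A nonempty closed subsystem of `D.roots n` different from the whole of it. The maximal closed
subsystems of the paper are the maximal ones among these, see `isMaxClosedSubSys_iff`. -/
def IsProperClosed (Ψ : Set (E n × G)) : Prop :=
  Ψ.Nonempty ∧ D.IsClosedSystem Ψ ∧ Ψ ≠ D.roots n

end BCDatum

/-! ### Closedness under affine reflections -/

namespace BCDatum

variable {n : ℕ} {p q s : SignedIndex n} {D : BCDatum Y} {Ψ : Set (E n × Y)}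
  {a x : E n × Y} {v : E n} {y z : Y}

namespace IsClosedSystem

lemma reflAff_mem_of_fst_eq (C : D.IsClosedSystem Ψ) (ha : (v, y) ∈ Ψ) (hx : (v, z) ∈ Ψ) :
    reflAff (v, y) (v, z) ∈ Ψ := by
  have hv : v ≠ 0 := by
    rintro rfl
    exact zero_notMem_BCn (D.fst_mem_BCn_of_mem_roots (C.subset ha))
  convert C.neg_mem _ (C.refl_mem _ _ _ ha hx) using 1
  rw [reflAff_eq_sub, pairing_self hv]
  ext1 <;> simp <;> module

lemma reflAff_mem_of_short_of_add (C : D.IsClosedSystem Ψ) (ha : (ε p, y) ∈ Ψ)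
    (hx : (ε p + ε s, z) ∈ Ψ) : reflAff (ε p, y) (ε p + ε s, z) ∈ Ψ := by
  by_cases h : s = p
  · subst h
    convert C.neg_mem _ (C.refl_double_mem _ _ _ ha hx) using 1
    have : pairing (ε s + ε s) (ε s) = 4 := by
      rw [pairing_ε, inner_add_left, inner_ε_self]
      norm_num
    rw [reflAff_eq_sub, this]
    ext1 <;> simp <;> module
  · have hs : (ε s, z - y) ∈ Ψ := C.add_sub_short (add_comm (ε p) (ε s) ▸ hx) ha
    have hl : z - y + -y ∈ D.long := by
      convert sub_mem (C.mem_long hx) (D.two_nsmul_mem_long (C.mem_short ha)) using 1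
      abel
    convert C.short_add_short hs (C.neg_short ha) (by simpa [eq_comm] using h) hl
      (fun hsp ↦ absurd hsp (C.ne_neg hx)) using 1
    rw [reflAff_eq_sub, pairing_ε_add_ε_left ⟨h, C.ne_neg hx⟩]
    ext1 <;> simp <;> module

lemma reflAff_mem_of_add_of_short (C : D.IsClosedSystem Ψ) (ha : (ε p + ε q, y) ∈ Ψ)
    (hx : (ε p, z) ∈ Ψ) : reflAff (ε p + ε q, y) (ε p, z) ∈ Ψ := by
  convert C.neg_short (C.add_sub_short (add_comm (ε p) (ε q) ▸ ha) hx) using 1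
  rw [reflAff_eq_sub, pairing_ε_add_left (C.ne_neg ha)]
  ext1 <;> simp

lemma reflAff_mem_of_add_of_add (C : D.IsClosedSystem Ψ) (ha : (ε p + ε q, y) ∈ Ψ)
    (hx : (ε p + ε s, z) ∈ Ψ) : reflAff (ε p + ε q, y) (ε p + ε s, z) ∈ Ψ := by
  by_cases hsq : s = q
  · subst hsq
    exact C.reflAff_mem_of_fst_eq ha hx
  have hpq : pairing (ε p) (ε p + ε q) = 1 := pairing_ε_add_left (C.ne_neg ha)
  have hqp : pairing (ε q) (ε p + ε q) = 1 := by
    rw [add_comm]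
    exact pairing_ε_add_left fun h ↦ C.ne_neg ha (by rw [h, neg_neg])
  by_cases hsq' : s = -q
  · subst hsq'
    rw [reflAff_eq_sub, pairing_add_left, ε_neg, pairing_neg_left, hpq, hqp]
    simpa using hx
  -- `x - a` is the root `ε s - ε q`; for `s = p` a second step leads to `-2 ε q`.
  have hsub : (ε s + ε (-q), z + -y) ∈ Ψ :=
    C.add_add_add (add_comm (ε p) (ε s) ▸ hx) (C.neg_add ha)
      (fun h ↦ hsq (neg_injective h).symm) (fun h ↦ absurd h hsq')
  by_cases hsp : s = p
  · subst hsp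
    have hd : z + -y + -y ∈ D.div := by
      convert D.sub_two_nsmul_mem_div (C.mem_div hx) (C.mem_long ha) using 1
      abel
    convert C.add_add_add (add_comm (ε s) (ε (-q)) ▸ hsub) (C.neg_add ha)
      (-q).ne_neg_self (fun _ ↦ hd) using 1
    rw [reflAff_eq_sub, pairing_add_left, hpq]
    ext1 <;> simp <;> module
  · convert hsub using 1
    rw [reflAff_eq_sub, pairing_add_left, hpq,
      pairing_ε_add_of_ne hsp (C.ne_neg hx) hsq hsq']
    ext1 <;> simp <;> abel

lemma reflAff_mem_of_eq_or_eq_neg (C : D.IsClosedSystem Ψ) {a' x' : E n × Y}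
    (ha : a = a' ∨ a = -a') (hx : x = x' ∨ x = -x') (h : reflAff a' x' ∈ Ψ) :
    reflAff a x ∈ Ψ := by
  obtain rfl | rfl := ha <;> obtain rfl | rfl := hx <;>
    simpa only [reflAff_neg_left, reflAff_neg_right, neg_neg] using
      (by first | exact h | exact C.neg_mem _ h)

lemma reflAff_mem_of_short (C : D.IsClosedSystem Ψ) (ha : (ε p, y) ∈ Ψ) (hx : x ∈ Ψ) :
    reflAff (ε p, y) x ∈ Ψ := by
  obtain ⟨r, z, rfl⟩ | ⟨r, s, z, rfl⟩ := D.eq_of_mem_roots (C.subset hx)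
  · by_cases hr : r = p
    · subst hr
      exact C.reflAff_mem_of_fst_eq ha hx
    by_cases hr' : r = -p
    · subst hr'
      have hx' : (ε p, -z) ∈ Ψ := by simpa using C.neg_short hx
      exact C.reflAff_mem_of_eq_or_eq_neg (.inl rfl) (.inr (by simp))
        (C.reflAff_mem_of_fst_eq ha hx')
    · rw [reflAff_eq_self (by rw [pairing_ε, inner_ε_eq_zero hr hr', mul_zero])]
      exact hx
  · by_cases hp : p = r ∨ p = -r ∨ p = s ∨ p = -s
    · obtain ⟨u, w, hu, hxu⟩ := C.exists_mem_add_left hx hp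
      exact C.reflAff_mem_of_eq_or_eq_neg (.inl rfl) hxu (C.reflAff_mem_of_short_of_add ha hu)
    · simp only [not_or, eq_comm (a := p), neg_eq_iff_eq_neg] at hp
      rw [reflAff_eq_self (by
        rw [pairing_add_left, pairing_ε, pairing_ε, inner_ε_eq_zero hp.1 hp.2.1,
          inner_ε_eq_zero hp.2.2.1 hp.2.2.2, mul_zero, add_zero])]
      exact hx

lemma reflAff_mem_of_add (C : D.IsClosedSystem Ψ) (ha : (ε p + ε q, y) ∈ Ψ) (hx : x ∈ Ψ) :
    reflAff (ε p + ε q, y) x ∈ Ψ := by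
  have pairing_eq_zero {r} (hr : ¬(r = p ∨ r = -p ∨ r = q ∨ r = -q)) :
      pairing (ε r) (ε p + ε q) = 0 := by
    simp only [not_or] at hr
    exact pairing_ε_add_of_ne hr.1 hr.2.1 hr.2.2.1 hr.2.2.2
  obtain ⟨r, z, rfl⟩ | ⟨r, s, z, rfl⟩ := D.eq_of_mem_roots (C.subset hx)
  · by_cases hr : r = p ∨ r = -p ∨ r = q ∨ r = -q
    · obtain ⟨u, w, hu, hau⟩ := C.exists_mem_add_left ha hr
      exact C.reflAff_mem_of_eq_or_eq_neg hau (.inl rfl) (C.reflAff_mem_of_add_of_short hu hx)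
    · rw [reflAff_eq_self (pairing_eq_zero hr)]
      exact hx
  · by_cases hr : r = p ∨ r = -p ∨ r = q ∨ r = -q
    · obtain ⟨u, w, hu, hau⟩ := C.exists_mem_add_left ha hr
      exact C.reflAff_mem_of_eq_or_eq_neg hau (.inl rfl) (C.reflAff_mem_of_add_of_add hu hx)
    by_cases hs : s = p ∨ s = -p ∨ s = q ∨ s = -q
    · obtain ⟨u, w, hu, hau⟩ := C.exists_mem_add_left ha hs
      rw [add_comm (ε r)] at hx ⊢
      exact C.reflAff_mem_of_eq_or_eq_neg hau (.inl rfl) (C.reflAff_mem_of_add_of_add hu hx)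
    · rw [reflAff_eq_self (by
        rw [pairing_add_left, pairing_eq_zero hr, pairing_eq_zero hs, add_zero])]
      exact hx

lemma reflAff_mem (C : D.IsClosedSystem Ψ) (ha : a ∈ Ψ) (hx : x ∈ Ψ) : reflAff a x ∈ Ψ := by
  obtain ⟨p, y, rfl⟩ | ⟨p, q, y, rfl⟩ := D.eq_of_mem_roots (C.subset ha)
  exacts [C.reflAff_mem_of_short ha hx, C.reflAff_mem_of_add ha hx]

end IsClosedSystem

theorem isClosedSystem_iff : D.IsClosedSystem Ψ ↔ Ψ ⊆ D.roots n ∧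
    (∀ a ∈ Ψ, ∀ x ∈ Ψ, reflAff a x ∈ Ψ) ∧ ∀ x ∈ Ψ, ∀ y ∈ Ψ, x + y ∈ D.roots n → x + y ∈ Ψ := by
  refine ⟨fun C ↦ ⟨C.subset, fun a ha x hx ↦ C.reflAff_mem ha hx, C.add_mem⟩, ?_⟩
  rintro ⟨hsub, hrefl, hadd⟩
  have pairing_self {v y} (h : (v, y) ∈ Ψ) : pairing v v = 2 := pairing_self <| by
    rintro rfl
    exact zero_notMem_BCn (D.fst_mem_BCn_of_mem_roots (hsub h))
  have neg_mem : ∀ x ∈ Ψ, -x ∈ Ψ := by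
    intro x hx
    convert hrefl x hx x hx using 1
    rw [reflAff_eq_sub, pairing_self hx]
    module
  refine ⟨hsub, neg_mem, fun v y z hy hz ↦ ?_, fun p y d hy hd ↦ ?_, hadd⟩
  · convert neg_mem _ (hrefl _ hy _ hz) using 1
    rw [reflAff_eq_sub, pairing_self hy]
    ext1 <;> simp <;> module
  · convert neg_mem _ (hrefl _ hy _ hd) using 1
    rw [reflAff_eq_sub, pairing_add_left, pairing_self hy]
    ext1 <;> simp <;> module

theorem isMaxClosedSubSys_iff :
    IsMaxClosedSubSys (D.roots n) Ψ ↔ Maximal D.IsProperClosed Ψ := by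
  have closed_iff (Ψ : Set (E n × Y)) :
      IsClosedSubSys (D.roots n) Ψ ↔ D.IsProperClosed Ψ := by
    rw [IsClosedSubSys, IsSubSys, IsProperClosed, isClosedSystem_iff]
    tauto
  simp only [IsMaxClosedSubSys, closed_iff, maximal_iff, eq_comm]

end BCDatum

/-! ### Two-coloured systems -/

namespace BCDatum

variable {G : Type*} [AddCommGroup G] {D : BCDatum G} {n : ℕ} {p q r s : SignedIndex n}
  {y z : G} {I : Set (Fin n)} {P : Set (G ⧸ D.long)} {Ψ : Set (E n × G)} {x : E n × G}

lemma add_add_short_mem (subset : Ψ ⊆ D.roots n) (neg_mem : ∀ x ∈ Ψ, -x ∈ Ψ)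
    (add_sub_short : ∀ p q y z, (ε p + ε q, y) ∈ Ψ → (ε q, z) ∈ Ψ → (ε p, y - z) ∈ Ψ)
    (hpq : (ε p + ε q, y) ∈ Ψ) (hr : (ε r, z) ∈ Ψ)
    (h : (ε p + ε q, y) + (ε r, z) ∈ D.roots n) : (ε p + ε q, y) + (ε r, z) ∈ Ψ := by
  have cancel {p q} (hpq : (ε p + ε q, y) ∈ Ψ) (hq : (ε (-q), z) ∈ Ψ) :
      (ε p + ε q, y) + (ε (-q), z) ∈ Ψ := by
    convert add_sub_short p q y (-z) hpq (by simpa using neg_mem _ hq) using 1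
    ext1 <;> simp
  obtain rfl | rfl := cancel_of_add_ε_mem_BCn (D.ε_add_mem_roots.1 (subset hpq)).1
    (D.fst_mem_BCn_of_mem_roots h)
  · rw [add_comm (ε p)] at hpq ⊢
    exact cancel hpq hr
  · exact cancel hpq hr

lemma add_add_add_mem (subset : Ψ ⊆ D.roots n)
    (add_add_add : ∀ p q r y z, (ε p + ε q, y) ∈ Ψ → (ε (-q) + ε r, z) ∈ Ψ → r ≠ -p →
      (p = r → y + z ∈ D.div) → (ε p + ε r, y + z) ∈ Ψ)
    (hpq : (ε p + ε q, y) ∈ Ψ) (hrs : (ε r + ε s, z) ∈ Ψ)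
    (h : (ε p + ε q, y) + (ε r + ε s, z) ∈ D.roots n) :
    (ε p + ε q, y) + (ε r + ε s, z) ∈ Ψ := by
  have cancel {p q s} (hpq : (ε p + ε q, y) ∈ Ψ) (hqs : (ε (-q) + ε s, z) ∈ Ψ)
      (h : (ε p + ε q, y) + (ε (-q) + ε s, z) ∈ D.roots n) :
      (ε p + ε q, y) + (ε (-q) + ε s, z) ∈ Ψ := by
    have hsum : (ε p + ε q, y) + (ε (-q) + ε s, z) = (ε p + ε s, y + z) := by ext1 <;> simp
    rw [hsum, ε_add_mem_roots] at h
    exact hsum ▸ add_add_add p q s y z hpq hqs h.1 h.2.2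
  obtain rfl | rfl | rfl | rfl := cancel_of_add_add_mem_BCn
    (D.ε_add_mem_roots.1 (subset hpq)).1 (D.ε_add_mem_roots.1 (subset hrs)).1
    (D.fst_mem_BCn_of_mem_roots h)
  · rw [add_comm (ε p)] at hpq h ⊢
    exact cancel hpq hrs h
  · exact cancel hpq hrs h
  · rw [add_comm (ε p)] at hpq h ⊢
    rw [add_comm (ε r)] at hrs h ⊢
    exact cancel hpq hrs h
  · rw [add_comm (ε r)] at hrs h ⊢
    exact cancel hpq hrs h

lemma add_mem_of_coordinates (subset : Ψ ⊆ D.roots n) (neg_mem : ∀ x ∈ Ψ, -x ∈ Ψ)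
    (short_add_short : ∀ p q y z, (ε p, y) ∈ Ψ → (ε q, z) ∈ Ψ → q ≠ -p → y + z ∈ D.long →
      (p = q → y + z ∈ D.div) → (ε p + ε q, y + z) ∈ Ψ)
    (add_sub_short : ∀ p q y z, (ε p + ε q, y) ∈ Ψ → (ε q, z) ∈ Ψ → (ε p, y - z) ∈ Ψ)
    (add_add_add : ∀ p q r y z, (ε p + ε q, y) ∈ Ψ → (ε (-q) + ε r, z) ∈ Ψ → r ≠ -p →
      (p = r → y + z ∈ D.div) → (ε p + ε r, y + z) ∈ Ψ) :
    ∀ x ∈ Ψ, ∀ y ∈ Ψ, x + y ∈ D.roots n → x + y ∈ Ψ := by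
  intro x hx w hw hxw
  obtain ⟨p, y, rfl⟩ | ⟨p, q, y, rfl⟩ := D.eq_of_mem_roots (subset hx) <;>
    obtain ⟨r, z, rfl⟩ | ⟨r, s, z, rfl⟩ := D.eq_of_mem_roots (subset hw)
  · have h := D.ε_add_mem_roots.1 hxw
    exact short_add_short p r y z hx hw h.1 h.2.1 h.2.2
  · rw [add_comm] at hxw ⊢
    exact add_add_short_mem subset neg_mem add_sub_short hw hx hxw
  · exact add_add_short_mem subset neg_mem add_sub_short hx hw hxw
  · exact add_add_add_mem subset add_add_add hx hw hxw

lemma colored_subset_roots (I : Set (Fin n)) (P : Set (G ⧸ D.long)) :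
    D.colored I P ⊆ D.roots n := by
  rintro x (⟨p, hp, hy, -⟩ | ⟨p, q, hq, hpq, hy, -⟩)
  exacts [.inl ⟨p, hp, hy⟩, .inr ⟨p, q, hq, hpq, hy⟩]

lemma neg_mem_colored (hx : x ∈ D.colored I P) : -x ∈ D.colored I P := by
  obtain ⟨p, y, rfl⟩ | ⟨p, q, y, rfl⟩ := D.eq_of_mem_roots (colored_subset_roots I P hx)
  · have h := D.ε_mem_colored.1 hx
    rw [Prod.neg_mk, ← ε_neg, ε_mem_colored, D.mk_neg_eq h.1]
    exact ⟨D.neg_mem_short h.1, h.2⟩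
  · have h := D.ε_add_mem_colored.1 hx
    rw [Prod.neg_mk, neg_add, ← ε_neg, ← ε_neg, ε_add_mem_colored]
    exact ⟨fun hpq ↦ h.1 (neg_injective hpq), ⟨neg_mem h.2.1.1,
      fun hpq ↦ D.neg_mem_div (h.2.1.2 (neg_injective hpq))⟩, h.2.2⟩

lemma two_nsmul_sub_mem_colored {v : E n} (hy : (v, y) ∈ D.colored I P)
    (hz : (v, z) ∈ D.colored I P) : (v, 2 • y - z) ∈ D.colored I P := by
  obtain ⟨p, _, hp⟩ | ⟨p, q, _, hpq⟩ := D.eq_of_mem_roots (colored_subset_roots I P hy)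
  · obtain ⟨rfl, rfl⟩ := Prod.mk.inj hp
    rw [ε_mem_colored] at hy hz ⊢
    have hl := D.two_nsmul_mem_long hy.1
    have hclass : ((2 • y - z : G) : G ⧸ D.long) = z := by
      rw [sub_eq_add_neg, QuotientAddGroup.mk_add, (QuotientAddGroup.eq_zero_iff _).2 hl,
        zero_add, D.mk_neg_eq hz.1]
    refine ⟨?_, hclass ▸ hz.2⟩
    rw [sub_eq_add_neg, add_comm]
    exact D.add_mem_short (D.neg_mem_short hz.1) hl
  · obtain ⟨rfl, rfl⟩ := Prod.mk.inj hpq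
    rw [ε_add_mem_colored] at hy hz ⊢
    exact ⟨hy.1, ⟨sub_mem (nsmul_mem hy.2.1.1 2) hz.2.1.1,
      fun h ↦ D.two_nsmul_sub_mem_div hy.2.1.1 (hz.2.1.2 h)⟩, hy.2.2⟩

lemma isClosedSystem_colored (I : Set (Fin n)) (P : Set (G ⧸ D.long)) :
    D.IsClosedSystem (D.colored I P) where
  subset := colored_subset_roots I P
  neg_mem _ := neg_mem_colored
  refl_mem _ _ _ := two_nsmul_sub_mem_colored
  refl_double_mem p y d hy hd := by
    rw [ε_mem_colored] at hy
    rw [ε_add_mem_colored] at hd ⊢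
    have h : 4 • y - d = 2 • (2 • y) - d := by rw [← mul_nsmul]
    rw [h]
    have hl := D.two_nsmul_mem_long hy.1
    exact ⟨hd.1, ⟨sub_mem (nsmul_mem hl 2) hd.2.1.1,
      fun h ↦ D.two_nsmul_sub_mem_div hl (hd.2.1.2 h)⟩, hd.2.2⟩
  add_mem := by
    refine add_mem_of_coordinates (colored_subset_roots I P) (fun _ ↦ neg_mem_colored) ?_ ?_ ?_
    · intro p q y z hp hq hpq hl hd
      rw [ε_mem_colored] at hp hq
      have hclass : (y : G ⧸ D.long) = z := by
        rw [← D.mk_neg_eq hq.1, eq_comm, QuotientAddGroup.eq, neg_neg, add_comm]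
        exact hl
      rw [hclass] at hp
      exact D.ε_add_mem_colored.2 ⟨hpq, ⟨hl, hd⟩, hp.2.symm.trans hq.2⟩
    · intro p q y z hpq hq
      rw [ε_add_mem_colored] at hpq
      rw [ε_mem_colored] at hq ⊢
      have hclass : ((y - z : G) : G ⧸ D.long) = z := by
        rw [sub_eq_add_neg, QuotientAddGroup.mk_add,
          (QuotientAddGroup.eq_zero_iff _).2 hpq.2.1.1, zero_add, D.mk_neg_eq hq.1]
      rw [hclass, sub_eq_add_neg, add_comm]
      exact ⟨D.add_mem_short (D.neg_mem_short hq.1) hpq.2.1.1, hq.2.trans hpq.2.2.symm⟩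
    · intro p q r y z hpq hqr hpr hd
      rw [ε_add_mem_colored] at hpq hqr ⊢
      exact ⟨hpr, ⟨add_mem hpq.2.1.1 hqr.2.1.1, hd⟩, hpq.2.2.trans hqr.2.2⟩

variable (D) in
lemma isClosedSystem_roots (n : ℕ) : D.IsClosedSystem (D.roots n) :=
  D.colored_univ_univ ▸ isClosedSystem_colored _ _

/-- The datum of the subsystem of type `B_n`: the divisible roots are discarded. -/
abbrev typeB (D : BCDatum G) : BCDatum G where
  short := D.short
  long := D.long
  div := ∅
  zero_mem_short := D.zero_mem_short
  add_mem_short := D.add_mem_short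
  two_nsmul_mem_long := D.two_nsmul_mem_long
  div_subset_long := Set.empty_subset _
  sub_two_nsmul_mem_div := False.elim

lemma ε_add_mem_typeB_roots :
    (ε p + ε q, y) ∈ D.typeB.roots n ↔ (q ≠ p ∧ q ≠ -p) ∧ y ∈ D.long := by
  simp only [ε_add_mem_roots, Set.mem_empty_iff_false, imp_false, eq_comm (a := p)]
  tauto

lemma typeB_roots_subset : D.typeB.roots n ⊆ D.roots n := by
  rintro x (h | ⟨p, q, hq, hpq, hy, hne⟩)
  exacts [.inl h, .inr ⟨p, q, hq, hpq, hy, fun h ↦ (hne h).elim⟩]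

lemma colored_inter_typeB_roots (I : Set (Fin n)) (P : Set (G ⧸ D.long)) :
    D.colored I P ∩ D.typeB.roots n = D.typeB.colored I P := by
  ext x
  refine ⟨fun ⟨hx, hx'⟩ ↦ ?_, fun hx ↦ ?_⟩
  · obtain ⟨p, y, rfl⟩ | ⟨p, q, y, rfl⟩ := eq_of_mem_roots _ hx'
    · exact D.typeB.ε_mem_colored.2 (D.ε_mem_colored.1 hx)
    · obtain ⟨hq, hy⟩ := D.typeB.ε_add_mem_roots.1 hx'
      exact D.typeB.ε_add_mem_colored.2 ⟨hq, hy, (D.ε_add_mem_colored.1 hx).2.2⟩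
  · have hx' := colored_subset_roots _ _ hx
    refine ⟨?_, hx'⟩
    obtain ⟨p, y, rfl⟩ | ⟨p, q, y, rfl⟩ := eq_of_mem_roots _ hx'
    · exact D.ε_mem_colored.2 (D.typeB.ε_mem_colored.1 hx)
    · obtain ⟨hq, hy⟩ := D.ε_add_mem_roots.1 (typeB_roots_subset hx')
      exact D.ε_add_mem_colored.2 ⟨hq, hy, (D.typeB.ε_add_mem_colored.1 hx).2.2⟩

lemma IsClosedSystem.inter_typeB_roots (C : D.IsClosedSystem Ψ) :
    D.typeB.IsClosedSystem (Ψ ∩ D.typeB.roots n) := by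
  have B := isClosedSystem_roots D.typeB n
  refine ⟨Set.inter_subset_right, fun x hx ↦ ⟨C.neg_mem x hx.1, B.neg_mem x hx.2⟩,
    fun v y z hy hz ↦ ⟨C.refl_mem v y z hy.1 hz.1, B.refl_mem v y z hy.2 hz.2⟩,
    fun p y d hy hd ↦ ⟨C.refl_double_mem p y d hy.1 hd.1, B.refl_double_mem p y d hy.2 hd.2⟩,
    fun x hx y hy hxy ↦ ⟨C.add_mem x hx.1 y hy.1 (typeB_roots_subset hxy), hxy⟩⟩

end BCDatum

/-! ### Maximality of two-coloured systems -/

namespace BCDatum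

variable {G : Type*} [AddCommGroup G] {D : BCDatum G} {n : ℕ} {p q r : SignedIndex n}
  {y l : G} {I : Set (Fin n)} {P : Set (G ⧸ D.long)} {Ψ : Set (E n × G)} {x : E n × G}

namespace IsClosedSystem

lemma neg_short_of_forall (C : D.IsClosedSystem Ψ) (hp : ∀ l ∈ D.long, (ε p, l) ∈ Ψ) :
    ∀ l ∈ D.long, (ε (-p), l) ∈ Ψ := fun l hl ↦ by
  simpa using C.neg_short (hp (-l) (D.long.neg_mem hl))

lemma short_of_forall_of_add (C : D.IsClosedSystem Ψ) (h : (ε p + ε q, y) ∈ Ψ)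
    (hq : ∀ l ∈ D.long, (ε q, l) ∈ Ψ) : ∀ l ∈ D.long, (ε p, l) ∈ Ψ := fun l hl ↦ by
  simpa using C.add_sub_short h (hq (y - l) (sub_mem (C.mem_long h) hl))

theorem eq_roots (C : D.IsClosedSystem Ψ) (hn : 2 ≤ n)
    (hlong : ∀ r, ∀ l ∈ D.long, (ε r, l) ∈ Ψ) (hshort : ∀ y ∈ D.short, ∃ r, (ε r, y) ∈ Ψ) :
    Ψ = D.roots n := by
  have hadd {p q l} (h : (ε p + ε q, l) ∈ D.roots n) : (ε p + ε q, l) ∈ Ψ := by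
    obtain ⟨hq, hl, hd⟩ := D.ε_add_mem_roots.1 h
    simpa using C.short_add_short (hlong p l hl) (hlong q 0 D.long.zero_mem) hq (by simpa)
      (by simpa)
  have change_index {r p y} (hy : (ε r, y) ∈ Ψ) (hp : p ≠ r ∧ p ≠ -r) : (ε p, y) ∈ Ψ := by
    have h : (ε p + ε (-r), 0) ∈ Ψ := hadd <| D.ε_add_mem_roots.2
      ⟨fun h ↦ hp.1 (neg_injective h).symm, D.long.zero_mem, fun h ↦ (hp.2 h).elim⟩
    simpa using C.add_sub_short h (C.neg_short hy)
  refine C.subset.antisymm fun x hx ↦ ?_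
  obtain ⟨p, y, rfl⟩ | ⟨p, q, y, rfl⟩ := D.eq_of_mem_roots hx
  · obtain ⟨r, hr⟩ := hshort y (D.ε_mem_roots.1 hx)
    by_cases hp : p ≠ r ∧ p ≠ -r
    · exact change_index hr hp
    · obtain ⟨s, hs⟩ := r.exists_index_ne hn
      refine change_index (change_index hr hs) ?_
      rw [← SignedIndex.index_ne_iff] at hp hs ⊢
      rw [not_not] at hp
      exact fun h ↦ hs (hp.trans h.symm)
  · exact hadd hx

end IsClosedSystem

lemma isProperClosed_colored (hI : I.Nonempty) (hI' : I ≠ Set.univ) :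
    D.IsProperClosed (D.colored I P) := by
  obtain ⟨i, hi⟩ := hI
  obtain ⟨j, hj⟩ := (Set.ne_univ_iff_exists_notMem I).1 hI'
  let p : SignedIndex n := ⟨i, 1⟩
  let q : SignedIndex n := ⟨j, 1⟩
  have hpq : q ≠ p ∧ q ≠ -p := SignedIndex.index_ne_iff.1 (ne_of_mem_of_not_mem hi hj)
  refine ⟨?_, isClosedSystem_colored I P, fun h ↦ ?_⟩
  · by_cases h0 : ((0 : G) : G ⧸ D.long) ∈ P
    · exact ⟨(ε p, 0), D.ε_mem_colored.2 ⟨D.zero_mem_short, iff_of_true h0 hi⟩⟩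
    · exact ⟨(ε q, 0), D.ε_mem_colored.2 ⟨D.zero_mem_short, iff_of_false h0 hj⟩⟩
  · have hmem : (ε p + ε q, (0 : G)) ∈ D.colored I P :=
      h ▸ D.add_mem_roots_of_ne hpq D.long.zero_mem
    exact hj ((D.ε_add_mem_colored.1 hmem).2.2.1 hi)

lemma exists_index_mem_iff (hI : I.Nonempty) (hI' : I ≠ Set.univ) (c : Prop) :
    ∃ p : SignedIndex n, (c ↔ p.index ∈ I) := by
  obtain ⟨i, hi⟩ := hI
  obtain ⟨j, hj⟩ := (Set.ne_univ_iff_exists_notMem I).1 hI'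
  by_cases hc : c
  exacts [⟨⟨i, 1⟩, iff_of_true hc hi⟩, ⟨⟨j, 1⟩, iff_of_false hc hj⟩]

lemma exists_mixed_of_not_subset (C : D.IsClosedSystem Ψ) (hI : I.Nonempty) (hI' : I ≠ Set.univ)
    (hsub : D.colored I P ⊆ Ψ) (hx : x ∈ Ψ) (hx' : x ∉ D.colored I P) :
    ∃ p q y, (p.index ∈ I ↔ q.index ∉ I) ∧ (ε p + ε q, y) ∈ Ψ := by
  obtain ⟨p, y, rfl⟩ | ⟨p, q, y, rfl⟩ := D.eq_of_mem_roots (C.subset hx)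
  · have hy := C.mem_short hx
    obtain ⟨r, hr⟩ := exists_index_mem_iff hI hI' ((y : G ⧸ D.long) ∈ P)
    have hry : (ε r, -y) ∈ Ψ :=
      hsub (D.ε_mem_colored.2 ⟨D.neg_mem_short hy, by rwa [D.mk_neg_eq hy]⟩)
    have hpr : p.index ∈ I ↔ r.index ∉ I := by
      rw [D.ε_mem_colored] at hx'
      tauto
    have hne : r ≠ p ∧ r ≠ -p :=
      SignedIndex.index_ne_iff.1 fun h ↦ by simp [h] at hpr
    exact ⟨p, r, y + -y, hpr, C.short_add_short hx hry hne.2 (by simp)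
      fun h ↦ (hne.1 h.symm).elim⟩
  · refine ⟨p, q, y, ?_, hx⟩
    have h := D.ε_add_mem_roots.1 (C.subset hx)
    rw [D.ε_add_mem_colored] at hx'
    tauto

lemma forall_short_of_mixed (C : D.IsClosedSystem Ψ) (hsub : D.colored I P ⊆ Ψ)
    (hpq : p.index ∈ I ↔ q.index ∉ I) (h : (ε p + ε q, y) ∈ Ψ) (r : SignedIndex n) :
    ∀ l ∈ D.long, (ε r, l) ∈ Ψ := by
  have of_color_zero {r} (hr : ((0 : G) : G ⧸ D.long) ∈ P ↔ r.index ∈ I) :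
      ∀ l ∈ D.long, (ε r, l) ∈ Ψ := fun l hl ↦ by
    refine hsub (D.ε_mem_colored.2 ⟨D.mem_short_of_mem_long hl, ?_⟩)
    rwa [(QuotientAddGroup.eq_zero_iff l).2 hl]
  by_cases hr : ((0 : G) : G ⧸ D.long) ∈ P ↔ r.index ∈ I
  · exact of_color_zero hr
  have transfer {p q} (h : (ε p + ε q, y) ∈ Ψ) (hpr : p.index ∈ I ↔ r.index ∈ I)
      (hq : ((0 : G) : G ⧸ D.long) ∈ P ↔ q.index ∈ I) : ∀ l ∈ D.long, (ε r, l) ∈ Ψ := by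
    have hp := C.short_of_forall_of_add h (of_color_zero hq)
    by_cases hrp : r.index = p.index
    · obtain rfl | rfl := SignedIndex.index_eq_iff.1 hrp
      exacts [hp, C.neg_short_of_forall hp]
    · obtain ⟨hne, hne'⟩ := SignedIndex.index_ne_iff.1 hrp
      exact C.short_of_forall_of_add (hsub (D.ε_add_mem_colored.2
        ⟨hne', ⟨D.long.zero_mem, fun h ↦ (hne h.symm).elim⟩, hpr.symm⟩)) hp
  by_cases hq : ((0 : G) : G ⧸ D.long) ∈ P ↔ q.index ∈ I
  · exact transfer h (by tauto) hq
  · rw [add_comm] at h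
    exact transfer h (by tauto) (by tauto)

theorem maximal_colored (hI : I.Nonempty) (hI' : I ≠ Set.univ) (P : Set (G ⧸ D.long)) :
    Maximal D.IsProperClosed (D.colored I P) := by
  refine ⟨isProperClosed_colored hI hI', fun Ψ ⟨_, C, hne⟩ hsub ↦ ?_⟩
  by_contra hnot
  obtain ⟨x, hx, hx'⟩ := Set.not_subset.1 hnot
  obtain ⟨p, q, y, hpq, h⟩ := exists_mixed_of_not_subset C hI hI' hsub hx hx'
  have hn : 2 ≤ n :=
    Fin.nontrivial_iff_two_le.1 ⟨p.index, q.index, fun h ↦ by simp [h] at hpq⟩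
  refine hne (C.eq_roots hn (forall_short_of_mixed C hsub hpq h) fun y hy ↦ ?_)
  obtain ⟨r, hr⟩ := exists_index_mem_iff hI hI' ((y : G ⧸ D.long) ∈ P)
  exact ⟨r, hsub (D.ε_mem_colored.2 ⟨hy, hr⟩)⟩

variable (D) in
lemma ε_notMem_colored_empty_univ : (ε p, y) ∉ D.colored ∅ Set.univ := by
  simp [ε_mem_colored]

lemma ε_add_mem_colored_empty_univ :
    (ε p + ε q, l) ∈ D.colored ∅ Set.univ ↔ (ε p + ε q, l) ∈ D.roots n := by
  simp [ε_add_mem_colored]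

lemma forall_short_of_colored_empty_univ_subset (hn : 2 ≤ n) (C : D.IsClosedSystem Ψ)
    (hsub : D.colored ∅ Set.univ ⊆ Ψ) (hr : (ε r, y) ∈ Ψ) (hy : y ∈ D.long) :
    ∀ p, ∀ l ∈ D.long, (ε p, l) ∈ Ψ := by
  have hadd {p q l} (hpq : q ≠ p ∧ q ≠ -p) (hl : l ∈ D.long) : (ε p + ε q, l) ∈ Ψ :=
    hsub (ε_add_mem_colored_empty_univ.2 (D.add_mem_roots_of_ne hpq hl))
  have hother {p} (hp : p ≠ r ∧ p ≠ -r) : ∀ l ∈ D.long, (ε p, l) ∈ Ψ := fun l hl ↦ by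
    rw [← add_sub_cancel_right l y]
    exact C.add_sub_short (add_comm (ε r) (ε p) ▸ hadd hp (add_mem hl hy)) hr
  have hself : ∀ l ∈ D.long, (ε r, l) ∈ Ψ := by
    obtain ⟨q, hq⟩ := r.exists_index_ne hn
    exact C.short_of_forall_of_add (hadd hq D.long.zero_mem) (hother hq)
  intro p
  by_cases hp : r.index = p.index
  · obtain rfl | rfl := SignedIndex.index_eq_iff.1 hp.symm
    exacts [hself, C.neg_short_of_forall hself]
  · exact hother (SignedIndex.index_ne_iff.1 hp)

theorem maximal_colored_empty_univ (hn : 2 ≤ n) (h : D.short = D.long) :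
    Maximal D.IsProperClosed (D.colored (∅ : Set (Fin n)) Set.univ) := by
  let p : SignedIndex n := ⟨⟨0, by lia⟩, 1⟩
  obtain ⟨q, hq⟩ := p.exists_index_ne hn
  refine ⟨⟨⟨(ε p + ε q, 0), ?_⟩, isClosedSystem_colored _ _, fun h ↦ ?_⟩,
    fun Ψ ⟨_, C, hΨ⟩ hsub ↦ ?_⟩
  · exact ε_add_mem_colored_empty_univ.2 (D.add_mem_roots_of_ne hq D.long.zero_mem)
  · exact D.ε_notMem_colored_empty_univ (h ▸ D.ε_mem_roots.2 D.zero_mem_short :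
      (ε p, 0) ∈ D.colored ∅ Set.univ)
  · by_contra hnot
    obtain ⟨x, hx, hx'⟩ := Set.not_subset.1 hnot
    obtain ⟨r, y, rfl⟩ | ⟨r, s, y, rfl⟩ := D.eq_of_mem_roots (C.subset hx)
    · have hshort := forall_short_of_colored_empty_univ_subset hn C hsub hx (h.le (C.mem_short hx))
      exact hΨ (C.eq_roots hn hshort fun z hz ↦ ⟨p, hshort p z (h.le hz)⟩)
    · exact hx' (ε_add_mem_colored_empty_univ.2 (C.subset hx))

/-! ### Closed systems with missing roots -/

/-- The indices `i` such that `εᵢ` occurs in `Ψ` with a translation whose class lies in `P`. -/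
def shortIndices (D : BCDatum G) (Ψ : Set (E n × G)) (P : Set (G ⧸ D.long)) : Set (Fin n) :=
  {i | ∃ y : G, (ε ⟨i, 1⟩, y) ∈ Ψ ∧ (y : G ⧸ D.long) ∈ P}

namespace IsClosedSystem

lemma index_mem_shortIndices (C : D.IsClosedSystem Ψ) :
    p.index ∈ D.shortIndices Ψ P ↔ ∃ y : G, (ε p, y) ∈ Ψ ∧ (y : G ⧸ D.long) ∈ P := by
  have of_index_eq {p q : SignedIndex n} (h : q.index = p.index) :
      (∃ y : G, (ε p, y) ∈ Ψ ∧ (y : G ⧸ D.long) ∈ P) →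
        ∃ y : G, (ε q, y) ∈ Ψ ∧ (y : G ⧸ D.long) ∈ P := by
    rintro ⟨y, hy, hP⟩
    obtain rfl | rfl := SignedIndex.index_eq_iff.1 h
    · exact ⟨y, hy, hP⟩
    · exact ⟨-y, C.neg_short hy, by rwa [D.mk_neg_eq (C.mem_short hy)]⟩
  exact ⟨of_index_eq rfl, of_index_eq rfl⟩

lemma index_mem_shortIndices_iff_of_add (C : D.IsClosedSystem Ψ) (h : (ε p + ε q, l) ∈ Ψ) :
    p.index ∈ D.shortIndices Ψ P ↔ q.index ∈ D.shortIndices Ψ P := by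
  simp only [C.index_mem_shortIndices]
  have transfer {p q} (h : (ε p + ε q, l) ∈ Ψ) :
      (∃ y : G, (ε q, y) ∈ Ψ ∧ (y : G ⧸ D.long) ∈ P) →
        ∃ y : G, (ε p, y) ∈ Ψ ∧ (y : G ⧸ D.long) ∈ P := by
    rintro ⟨y, hy, hP⟩
    refine ⟨l - y, C.add_sub_short h hy, ?_⟩
    rwa [sub_eq_add_neg, QuotientAddGroup.mk_add, (QuotientAddGroup.eq_zero_iff _).2
      (C.mem_long h), zero_add, D.mk_neg_eq (C.mem_short hy)]
  exact ⟨transfer (add_comm (ε p) (ε q) ▸ h), transfer h⟩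

lemma subset_colored_shortIndices (C : D.IsClosedSystem Ψ)
    (hP : ∀ r (y : G), (ε r, y) ∈ Ψ → r.index ∈ D.shortIndices Ψ P → (y : G ⧸ D.long) ∈ P) :
    Ψ ⊆ D.colored (D.shortIndices Ψ P) P := by
  intro x hx
  obtain ⟨r, y, rfl⟩ | ⟨r, s, y, rfl⟩ := D.eq_of_mem_roots (C.subset hx)
  · exact D.ε_mem_colored.2 ⟨C.mem_short hx,
      fun h ↦ C.index_mem_shortIndices.2 ⟨y, hx, h⟩, hP r y hx⟩
  · obtain ⟨hne, hl⟩ := D.ε_add_mem_roots.1 (C.subset hx)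
    exact D.ε_add_mem_colored.2 ⟨hne, hl, C.index_mem_shortIndices_iff_of_add hx⟩

/-- If `±p` and `±q` never occur together, the translations of `ε p` give the first colour. -/
theorem exists_subset_colored (C : D.IsClosedSystem Ψ) (hp : (ε p, y) ∈ Ψ)
    (hpq : q ≠ p ∧ q ≠ -p) (h : ∀ l, (ε p + ε q, l) ∉ Ψ) :
    ∃ (I : Set (Fin n)) (P : Set (G ⧸ D.long)), I.Nonempty ∧ I ≠ Set.univ ∧
      Ψ ⊆ D.colored I P := by
  let P : Set (G ⧸ D.long) := {c | ∃ s : G, (ε p, s) ∈ Ψ ∧ (s : G ⧸ D.long) = c}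
  refine ⟨D.shortIndices Ψ P, P, ⟨p.index, C.index_mem_shortIndices.2 ⟨y, hp, y, hp, rfl⟩⟩,
    (Set.ne_univ_iff_exists_notMem _).2 ⟨q.index, fun hq ↦ ?_⟩,
    C.subset_colored_shortIndices fun r y hy hr ↦ ?_⟩
  · obtain ⟨z, hz, s, hs, hsz⟩ := C.index_mem_shortIndices.1 hq
    exact h _ (C.short_add_short hs hz hpq.2 (D.add_mem_long_of_mk_eq (C.mem_short hz) hsz)
      fun h ↦ (hpq.1 h.symm).elim)
  · obtain ⟨z, hz, s, hs, hsz⟩ := C.index_mem_shortIndices.1 hr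
    by_cases hrp : r.index = p.index
    · obtain rfl | rfl := SignedIndex.index_eq_iff.1 hrp
      · exact ⟨y, hy, rfl⟩
      · exact ⟨-y, by simpa using C.neg_short hy, D.mk_neg_eq (C.mem_short hy)⟩
    have hl : s + -z ∈ D.long := D.add_mem_long_of_mk_eq (D.neg_mem_short (C.mem_short hz))
      (hsz.trans (D.mk_neg_eq (C.mem_short hz)).symm)
    obtain ⟨hne, hne'⟩ := SignedIndex.index_ne_iff.1 hrp
    have hadd : (ε p + ε (-r), s + -z) ∈ Ψ := C.short_add_short hs (C.neg_short hz)
      (fun h ↦ hne (neg_injective h).symm) hl fun h ↦ (hne' h).elim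
    refine ⟨s + -z - -y, C.add_sub_short hadd (C.neg_short hy), ?_⟩
    rw [sub_neg_eq_add, QuotientAddGroup.mk_add, (QuotientAddGroup.eq_zero_iff _).2 hl, zero_add]

theorem subset_colored_univ (C : D.IsClosedSystem Ψ) :
    Ψ ⊆ D.colored (D.shortIndices Ψ Set.univ) Set.univ :=
  C.subset_colored_shortIndices fun _ _ _ _ ↦ trivial

end IsClosedSystem

theorem eq_colored_of_maximal_of_no_add (M : Maximal D.IsProperClosed Ψ) (hp : (ε p, y) ∈ Ψ)
    (hpq : q ≠ p ∧ q ≠ -p) (h : ∀ l, (ε p + ε q, l) ∉ Ψ) :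
    ∃ (I : Set (Fin n)) (P : Set (G ⧸ D.long)), I.Nonempty ∧ I ≠ Set.univ ∧
      Ψ = D.colored I P := by
  obtain ⟨I, P, hI, hI', hsub⟩ := M.prop.2.1.exists_subset_colored hp hpq h
  exact ⟨I, P, hI, hI', M.eq_of_le (isProperClosed_colored hI hI') hsub⟩

lemma not_maximal_colored_empty_univ (p : SignedIndex n) (h : D.short ≠ D.long) :
    ¬ Maximal D.IsProperClosed (D.colored (∅ : Set (Fin n)) Set.univ) := fun M ↦ by
  obtain ⟨y, hy, hl⟩ := Set.not_subset.1 fun hsub : D.short ⊆ D.long ↦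
    h (hsub.antisymm fun _ ↦ D.mem_short_of_mem_long)
  have hsub : D.colored (∅ : Set (Fin n)) Set.univ ⊆ D.colored Set.univ {0} := by
    rintro x (⟨q, -, -, hq⟩ | ⟨q, r, hr, hqr, hd, -⟩)
    exacts [(hq.1 trivial).elim, .inr ⟨q, r, hr, hqr, hd, Iff.rfl⟩]
  have heq := M.eq_of_le ⟨M.prop.1.mono hsub, isClosedSystem_colored _ _, fun heq ↦ ?_⟩ hsub
  · refine D.ε_notMem_colored_empty_univ (p := p) (y := 0) (heq ▸ D.ε_mem_colored.2 ?_)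
    simp [D.zero_mem_short]
  · have hp : (ε p, y) ∈ D.colored Set.univ {0} := heq ▸ D.ε_mem_roots.2 hy
    refine hl ((QuotientAddGroup.eq_zero_iff y).1 ?_)
    simpa using (D.ε_mem_colored.1 hp).2

theorem eq_colored_of_maximal_of_no_short (M : Maximal D.IsProperClosed Ψ)
    (h : ∀ y, (ε p, y) ∉ Ψ) :
    ∃ J : Set (Fin n), J ≠ Set.univ ∧ (D.short ≠ D.long → J ≠ ∅) ∧
      Ψ = D.colored J Set.univ := by
  have C := M.prop.2.1
  have hp : p.index ∉ D.shortIndices Ψ Set.univ := fun hp ↦ by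
    obtain ⟨y, hy, -⟩ := C.index_mem_shortIndices.1 hp
    exact h y hy
  have hΨ : Ψ = D.colored (D.shortIndices Ψ Set.univ) Set.univ := by
    refine M.eq_of_le ⟨M.prop.1.mono C.subset_colored_univ, isClosedSystem_colored _ _, ?_⟩
      C.subset_colored_univ
    intro heq
    have h0 : (ε p, 0) ∈ D.colored (D.shortIndices Ψ Set.univ) Set.univ :=
      heq ▸ D.ε_mem_roots.2 D.zero_mem_short
    exact hp ((D.ε_mem_colored.1 h0).2.1 trivial)
  refine ⟨D.shortIndices Ψ Set.univ, fun hJ ↦ hp (hJ ▸ Set.mem_univ _), fun hne hJ ↦ ?_, hΨ⟩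
  rw [hΨ, hJ] at M
  exact not_maximal_colored_empty_univ p hne M

end BCDatum

/-! ### Extension of a system of type `B` by divisible roots -/

namespace BCDatum

section IsFull

variable {G : Type*} {n : ℕ} {Ψ Ψ' : Set (E n × G)}

/-- Every root of type `B_n` occurs as a gradient in `Ψ`. -/
structure IsFull (Ψ : Set (E n × G)) : Prop where
  exists_short (p : SignedIndex n) : ∃ y, (ε p, y) ∈ Ψ
  exists_add {p q : SignedIndex n} : q ≠ p ∧ q ≠ -p → ∃ y, (ε p + ε q, y) ∈ Ψ

lemma IsFull.mono (F : IsFull Ψ) (h : Ψ ⊆ Ψ') : IsFull Ψ' where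
  exists_short p := (F.exists_short p).imp fun _ hy ↦ h hy
  exists_add hpq := (F.exists_add hpq).imp fun _ hy ↦ h hy

end IsFull

variable {G : Type*} [AddCommGroup G] {D : BCDatum G} {n : ℕ} {p q r : SignedIndex n}
  {y z a b d : G} {Ψ Ψ' : Set (E n × G)} {x : E n × G}

namespace IsClosedSystem

lemma add_add_neg_of_short_pair (C : D.IsClosedSystem Ψ) (hrp : r ≠ p ∧ r ≠ -p) (hl : d ∈ D.long)
    (hy : (ε p, y) ∈ Ψ) (hdy : (ε p, d - y) ∈ Ψ) (ha : (ε p + ε r, a) ∈ Ψ) :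
    (ε p + ε (-r), d - a) ∈ Ψ := by
  have hr : (ε r, a - y) ∈ Ψ := C.add_sub_short (add_comm (ε p) (ε r) ▸ ha) hy
  have heq : d - a = d - y + -(a - y) := by abel
  rw [heq]
  exact C.short_add_short hdy (C.neg_short hr) (fun h ↦ hrp.1 (neg_injective h))
    (heq ▸ sub_mem hl (C.mem_long ha)) fun h ↦ (hrp.2 (by rw [h, neg_neg])).elim

lemma short_of_add_of_add_neg (C : D.IsClosedSystem Ψ) (ha : (ε p + ε r, a) ∈ Ψ)
    (hb : (ε p + ε (-r), b) ∈ Ψ) (hy : (ε p, y) ∈ Ψ) : (ε p, a + b - y) ∈ Ψ := by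
  have hr : (ε r, a - y) ∈ Ψ := C.add_sub_short (add_comm (ε p) (ε r) ▸ ha) hy
  convert C.add_sub_short hb (C.neg_short hr) using 2
  abel

lemma sub_short_of_sub_short (C : D.IsClosedSystem Ψ) (hn : 2 ≤ n) (F : IsFull Ψ)
    (hl : d ∈ D.long) (hy : (ε p, y) ∈ Ψ) (hdy : (ε p, d - y) ∈ Ψ) (hz : (ε p, z) ∈ Ψ) :
    (ε p, d - z) ∈ Ψ := by
  obtain ⟨r, hr⟩ := p.exists_index_ne hn
  obtain ⟨a, ha⟩ := F.exists_add hr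
  rw [← add_sub_cancel a d]
  exact C.short_of_add_of_add_neg ha (C.add_add_neg_of_short_pair hr hl hy hdy ha) hz

lemma forall_sub_short_iff (C : D.IsClosedSystem Ψ) (F : IsFull Ψ) (hr : r ≠ p ∧ r ≠ -p)
    (hl : d ∈ D.long) :
    (∀ y, (ε p, y) ∈ Ψ → (ε p, d - y) ∈ Ψ) ↔
      ∃ a b, (ε p + ε r, a) ∈ Ψ ∧ (ε p + ε (-r), b) ∈ Ψ ∧ a + b = d := by
  constructor
  · intro h
    obtain ⟨y, hy⟩ := F.exists_short p
    obtain ⟨a, ha⟩ := F.exists_add hr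
    exact ⟨a, d - a, ha, C.add_add_neg_of_short_pair hr hl hy (h y hy) ha, by abel⟩
  · rintro ⟨a, b, ha, hb, rfl⟩ y hy
    exact C.short_of_add_of_add_neg ha hb hy

end IsClosedSystem

/-- The extension of a system `Ψ` of type `B_n` by the divisible roots `2 ε p ⊕ d` for which
`y ↦ d - y` preserves the translations of `ε p`. If `Ψ` is closed and full, it is the largest closed
system whose part of type `B_n` is `Ψ`. -/
def extend (D : BCDatum G) (Ψ : Set (E n × G)) : Set (E n × G) :=
  Ψ ∪ {x | ∃ p, x.1 = ε p + ε p ∧ x.2 ∈ D.div ∧ ∀ y, (ε p, y) ∈ Ψ → (ε p, x.2 - y) ∈ Ψ}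

lemma ε_mem_extend : (ε p, y) ∈ D.extend Ψ ↔ (ε p, y) ∈ Ψ := by
  refine ⟨?_, .inl⟩
  rintro (h | ⟨q, hq, -⟩)
  exacts [h, (ε_add_ε_ne_ε q.ne_neg_self hq.symm).elim]

lemma ε_add_mem_extend_of_ne (hpq : q ≠ p ∧ q ≠ -p) :
    (ε p + ε q, y) ∈ D.extend Ψ ↔ (ε p + ε q, y) ∈ Ψ := by
  refine ⟨?_, .inl⟩
  rintro (h | ⟨r, hr, -⟩)
  · exact h
  · obtain ⟨rfl, rfl⟩ | ⟨rfl, rfl⟩ := (ε_add_ε_eq_iff hpq.2 r.ne_neg_self).1 hr <;>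
      exact (hpq.1 rfl).elim

lemma double_mem_extend (C : D.typeB.IsClosedSystem Ψ) :
    (ε p + ε p, d) ∈ D.extend Ψ ↔
      d ∈ D.div ∧ ∀ y, (ε p, y) ∈ Ψ → (ε p, d - y) ∈ Ψ := by
  refine ⟨?_, fun h ↦ .inr ⟨p, rfl, h⟩⟩
  rintro (h | ⟨r, hr, h⟩)
  · exact (C.mem_div h).elim
  · obtain ⟨rfl, -⟩ | ⟨rfl, -⟩ := (ε_add_ε_eq_iff p.ne_neg_self r.ne_neg_self).1 hr <;> exact h

lemma extend_subset_roots (C : D.typeB.IsClosedSystem Ψ) : D.extend Ψ ⊆ D.roots n := by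
  rintro ⟨v, d⟩ (h | ⟨p, rfl, hd, -⟩)
  exacts [typeB_roots_subset (C.subset h),
    D.ε_add_mem_roots.2 ⟨p.ne_neg_self, D.mem_long_of_mem_div hd, fun _ ↦ hd⟩]

lemma extend_inter_typeB_roots (C : D.typeB.IsClosedSystem Ψ) :
    D.extend Ψ ∩ D.typeB.roots n = Ψ := by
  refine Set.Subset.antisymm ?_ fun x hx ↦ ⟨.inl hx, C.subset hx⟩
  rintro ⟨v, d⟩ ⟨h | ⟨p, rfl, -⟩, hB⟩
  exacts [h, ((ε_add_mem_typeB_roots.1 hB).1.1 rfl).elim]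

lemma neg_mem_extend (C : D.typeB.IsClosedSystem Ψ) (hx : x ∈ D.extend Ψ) : -x ∈ D.extend Ψ := by
  obtain ⟨v, d⟩ := x
  obtain h | ⟨p, rfl, hd, h⟩ := hx
  · exact .inl (C.neg_mem _ h)
  · refine .inr ⟨-p, by simp, D.neg_mem_div hd, fun y hy ↦ ?_⟩
    have := C.neg_short (h (-y) (by simpa using C.neg_short hy))
    simpa [sub_eq_add_neg, add_comm] using this

lemma two_nsmul_sub_mem_extend (C : D.typeB.IsClosedSystem Ψ) {v : E n}
    (hy : (v, y) ∈ D.extend Ψ) (hz : (v, z) ∈ D.extend Ψ) : (v, 2 • y - z) ∈ D.extend Ψ := by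
  obtain hyΨ | ⟨p, hp, -⟩ := id hy
  · obtain hzΨ | ⟨p, rfl, -⟩ := hz
    · exact .inl (C.refl_mem v y z hyΨ hzΨ)
    · exact (C.mem_div hyΨ).elim
  · obtain rfl : v = ε p + ε p := hp
    rw [double_mem_extend C] at hy hz ⊢
    refine ⟨D.two_nsmul_sub_mem_div (D.mem_long_of_mem_div hy.1) hz.1, fun w hw ↦ ?_⟩
    convert hy.2 _ (hz.2 _ (hy.2 w hw)) using 2
    abel

lemma double_add_mem_extend (C : D.typeB.IsClosedSystem Ψ) (F : IsFull Ψ)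
    (hp : (ε p + ε p, d) ∈ D.extend Ψ) (hr : (ε (-p) + ε r, z) ∈ D.extend Ψ) (hpr : r ≠ -p) :
    (ε p + ε r, d + z) ∈ D.extend Ψ := by
  have hroot := D.ε_add_mem_roots.1 (extend_subset_roots C hr)
  have hne : r ≠ p := by simpa using hroot.1
  rw [double_mem_extend C] at hp
  rw [ε_add_mem_extend_of_ne ⟨hpr, by simpa using hne⟩, add_comm (ε (-p))] at hr
  obtain ⟨w, hw⟩ := F.exists_short p
  have h : d - w + (z - -w) = d + z := by abel
  have hl : d + z ∈ D.long := D.long.add_mem (D.mem_long_of_mem_div hp.1) hroot.2.1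
  rw [ε_add_mem_extend_of_ne ⟨hne, hpr⟩, ← h]
  exact C.short_add_short (hp.2 w hw) (C.add_sub_short hr (C.neg_short hw)) hpr (h ▸ hl)
    fun hpr ↦ (hne hpr.symm).elim

lemma add_add_add_mem_extend (C : D.typeB.IsClosedSystem Ψ) (F : IsFull Ψ)
    (hpq : (ε p + ε q, y) ∈ D.extend Ψ) (hqr : (ε (-q) + ε r, z) ∈ D.extend Ψ) (hpr : r ≠ -p)
    (hd : p = r → y + z ∈ D.div) : (ε p + ε r, y + z) ∈ D.extend Ψ := by
  by_cases hq : q = p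
  · subst hq
    exact double_add_mem_extend C F hpq hqr hpr
  by_cases hr : r = -q
  · subst hr
    rw [add_comm (ε p), add_comm y]
    rw [← neg_neg q, add_comm (ε p)] at hpq
    exact double_add_mem_extend C F hqr hpq fun h ↦ hq (by simpa using h.symm)
  have hqp : q ≠ -p := (D.ε_add_mem_roots.1 (extend_subset_roots C hpq)).1
  have hrq : r ≠ - -q := (D.ε_add_mem_roots.1 (extend_subset_roots C hqr)).1
  rw [ε_add_mem_extend_of_ne ⟨hq, hqp⟩] at hpq
  rw [ε_add_mem_extend_of_ne ⟨hr, hrq⟩] at hqr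
  by_cases h : p = r
  · subst h
    refine (double_mem_extend C).2 ⟨hd rfl, fun w hw ↦ ?_⟩
    exact C.short_of_add_of_add_neg hpq (add_comm (ε p) (ε (-q)) ▸ hqr) hw
  · exact .inl (C.add_add_add hpq hqr hpr fun hpr ↦ (h hpr).elim)

theorem isClosedSystem_extend (hn : 2 ≤ n) (C : D.typeB.IsClosedSystem Ψ) (F : IsFull Ψ) :
    D.IsClosedSystem (D.extend Ψ) where
  subset := extend_subset_roots C
  neg_mem _ := neg_mem_extend C
  refl_mem _ _ _ := two_nsmul_sub_mem_extend C
  refl_double_mem p y d hy hd := by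
    rw [ε_mem_extend] at hy
    rw [double_mem_extend C] at hd ⊢
    have h : 4 • y - d = 2 • (2 • y) - d := by rw [← mul_nsmul]
    refine ⟨h ▸ D.two_nsmul_sub_mem_div (D.two_nsmul_mem_long (C.mem_short hy)) hd.1,
      fun w hw ↦ ?_⟩
    convert C.refl_mem _ _ _ hy (hd.2 _ (C.refl_mem _ _ _ hy hw)) using 2
    abel
  add_mem := by
    refine add_mem_of_coordinates (extend_subset_roots C) (fun _ ↦ neg_mem_extend C) ?_ ?_
      fun p q r y z ↦ add_add_add_mem_extend C F
    · intro p q y z hp hq hpq hl hd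
      rw [ε_mem_extend] at hp hq
      by_cases h : p = q
      · subst h
        refine (double_mem_extend C).2 ⟨hd rfl, fun w hw ↦ ?_⟩
        exact C.sub_short_of_sub_short hn F hl hp (by simpa using hq) hw
      · exact .inl (C.short_add_short hp hq hpq hl h)
    · intro p q y z hpq hq
      rw [ε_mem_extend] at hq ⊢
      by_cases h : p = q
      · subst h
        exact ((double_mem_extend C).1 hpq).2 z hq
      · have hne := (D.ε_add_mem_roots.1 (extend_subset_roots C hpq)).1
        exact C.add_sub_short ((ε_add_mem_extend_of_ne ⟨Ne.symm h, hne⟩).1 hpq) hq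

theorem isProperClosed_extend (hn : 2 ≤ n) (h : D.typeB.IsProperClosed Ψ) (F : IsFull Ψ) :
    D.IsProperClosed (D.extend Ψ) := by
  refine ⟨h.1.mono Set.subset_union_left, isClosedSystem_extend hn h.2.1 F, fun heq ↦ h.2.2 ?_⟩
  rw [← extend_inter_typeB_roots h.2.1, heq, Set.inter_eq_right.2 typeB_roots_subset]

lemma IsClosedSystem.eq_roots_of_typeB_roots_subset (C : D.IsClosedSystem Ψ) (hn : 2 ≤ n)
    (h : D.typeB.roots n ⊆ Ψ) : Ψ = D.roots n :=
  C.eq_roots hn (fun _ _ hl ↦ h (D.typeB.ε_mem_roots.2 (D.mem_short_of_mem_long hl)))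
    fun _ hy ↦ ⟨⟨⟨0, by lia⟩, 1⟩, h (D.typeB.ε_mem_roots.2 hy)⟩

lemma IsProperClosed.inter_typeB_roots (hn : 2 ≤ n) (h : D.IsProperClosed Ψ)
    (hne : (Ψ ∩ D.typeB.roots n).Nonempty) : D.typeB.IsProperClosed (Ψ ∩ D.typeB.roots n) :=
  ⟨hne, h.2.1.inter_typeB_roots, fun heq ↦
    h.2.2 (h.2.1.eq_roots_of_typeB_roots_subset hn (Set.inter_eq_right.1 heq))⟩

lemma subset_extend (hn : 2 ≤ n) (C : D.IsClosedSystem Ψ) (F : IsFull (Ψ ∩ D.typeB.roots n))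
    (C' : D.typeB.IsClosedSystem Ψ') (h : Ψ ∩ D.typeB.roots n ⊆ Ψ') : Ψ ⊆ D.extend Ψ' := by
  intro x hx
  by_cases hB : x ∈ D.typeB.roots n
  · exact .inl (h ⟨hx, hB⟩)
  obtain ⟨p, y, rfl⟩ | ⟨p, q, d, rfl⟩ := D.eq_of_mem_roots (C.subset hx)
  · exact (hB (D.typeB.ε_mem_roots.2 (C.mem_short hx))).elim
  obtain rfl : q = p := by
    by_contra hne
    exact hB (D.typeB.add_mem_roots_of_ne ⟨hne, C.ne_neg hx⟩ (C.mem_long hx))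
  obtain ⟨y, hy⟩ := F.exists_short q
  have hdy : (ε q, d - y) ∈ Ψ := C.add_sub_short hx hy.1
  refine (double_mem_extend C').2 ⟨C.mem_div hx, fun w hw ↦ ?_⟩
  exact C'.sub_short_of_sub_short hn (F.mono h) (C.mem_long hx) (h hy)
    (h ⟨hdy, D.typeB.ε_mem_roots.2 (C.mem_short hdy)⟩) hw

theorem maximal_extend (hn : 2 ≤ n) (M : Maximal D.typeB.IsProperClosed Ψ) (F : IsFull Ψ) :
    Maximal D.IsProperClosed (D.extend Ψ) := by
  refine ⟨isProperClosed_extend hn M.prop F, fun Ψ' h hsub ↦ ?_⟩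
  have hΨ : Ψ ⊆ Ψ' ∩ D.typeB.roots n := fun x hx ↦ ⟨hsub (.inl hx), M.prop.2.1.subset hx⟩
  have heq : Ψ = Ψ' ∩ D.typeB.roots n :=
    M.eq_of_le (h.inter_typeB_roots hn (M.prop.1.mono hΨ)) hΨ
  exact subset_extend hn h.2.1 (F.mono hΨ) M.prop.2.1 heq.ge

theorem maximal_inter_typeB_roots (hn : 2 ≤ n) (M : Maximal D.IsProperClosed Ψ)
    (F : IsFull (Ψ ∩ D.typeB.roots n)) :
    Maximal D.typeB.IsProperClosed (Ψ ∩ D.typeB.roots n) := by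
  refine ⟨M.prop.inter_typeB_roots hn ⟨_, (F.exists_short ⟨⟨0, by lia⟩, 1⟩).choose_spec⟩,
    fun Ψ' h hsub ↦ ?_⟩
  have heq : Ψ = D.extend Ψ' := M.eq_of_le (isProperClosed_extend hn h (F.mono hsub))
    (subset_extend hn M.prop.2.1 F h.2.1 hsub)
  rw [heq, extend_inter_typeB_roots h.2.1]

theorem extend_inter_typeB_roots_eq_of_maximal (hn : 2 ≤ n) (M : Maximal D.IsProperClosed Ψ)
    (F : IsFull (Ψ ∩ D.typeB.roots n)) : Ψ = D.extend (Ψ ∩ D.typeB.roots n) :=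
  have M' := maximal_inter_typeB_roots hn M F
  M.eq_of_le (isProperClosed_extend hn M'.prop F)
    (subset_extend hn M.prop.2.1 F M'.prop.2.1 subset_rfl)

end BCDatum

/-! ### Gradients and the three types of maximal closed subsystems -/

lemma nextIdx_ne {n : ℕ} (hn : 2 ≤ n) (i : Fin n) : nextIdx i ≠ i := by
  rw [Ne, Fin.ext_iff, nextIdx]
  obtain h | h : (i : ℕ) + 1 = n ∨ (i : ℕ) + 1 < n := by lia
  · rw [Fin.val_mk, h, Nat.mod_self]
    lia
  · rw [Fin.val_mk, Nat.mod_eq_of_lt h]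
    lia

namespace BCDatum

lemma exists_no_add_of_isSemiClosedSubRS {G : Type*} {n : ℕ} {Ψ : Set (E n × G)}
    (h : IsSemiClosedSubRS (Bn n) (shortBC n) (longBC n) ∅ (Gr Ψ)) :
    ∃ p q y, (q ≠ p ∧ q ≠ -p) ∧ (ε p, y) ∈ Ψ ∧ ∀ l, (ε p + ε q, l) ∉ Ψ := by
  obtain ⟨-, hnot, hsemi⟩ := h
  push Not at hnot
  obtain ⟨α, ⟨y, hy⟩, β, hβ, hBn, hGr⟩ := hnot
  obtain ⟨hα, hβ, hlong⟩ := (hsemi α ⟨y, hy⟩ β hβ hBn hGr).resolve_right fun h ↦ h.2.2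
  obtain ⟨p, rfl⟩ := mem_shortBC.1 hα
  obtain ⟨q, rfl⟩ := mem_shortBC.1 hβ
  exact ⟨p, q, y, ε_add_ε_mem_longBC.1 (hlong.resolve_right id), hy, fun l hl ↦ hGr ⟨l, hl⟩⟩

section Group

variable {G : Type*} [AddCommGroup G] {D : BCDatum G} {n : ℕ} {Ψ : Set (E n × G)}

variable (D) in
lemma colored_eq_union (I : Set (Fin n)) (P : Set (G ⧸ D.long)) :
    D.colored I P = D.typeB.colored I P ∪ {x | x.1 ∈ divBC n ∧ x.2 ∈ D.div} := by
  rw [← colored_inter_typeB_roots]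
  refine Set.Subset.antisymm (fun x hx ↦ ?_) (Set.union_subset Set.inter_subset_left ?_)
  · obtain ⟨p, y, rfl⟩ | ⟨p, q, y, rfl⟩ := D.eq_of_mem_roots (colored_subset_roots I P hx)
    · exact .inl ⟨hx, D.typeB.ε_mem_roots.2 (D.ε_mem_colored.1 hx).1⟩
    · obtain ⟨hq, ⟨hl, hd⟩, -⟩ := D.ε_add_mem_colored.1 hx
      by_cases h : q = p
      · subst h
        exact .inr ⟨mem_divBC.2 ⟨q, rfl⟩, hd rfl⟩
      · exact .inl ⟨hx, D.typeB.add_mem_roots_of_ne ⟨h, hq⟩ hl⟩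
  · rintro ⟨v, d⟩ ⟨hv, hd⟩
    obtain ⟨p, rfl⟩ := mem_divBC.1 hv
    exact D.ε_add_mem_colored.2 ⟨p.ne_neg_self, ⟨D.mem_long_of_mem_div hd, fun _ ↦ hd⟩, Iff.rfl⟩

lemma gr_subset_Bn (h : Ψ ⊆ D.typeB.roots n) : Gr Ψ ⊆ Bn n := by
  rintro v ⟨y, hy⟩
  obtain ⟨p, rfl, -⟩ | ⟨p, q, hq, rfl, -, hne⟩ := h hy
  exacts [mem_Bn.2 (.inl ⟨p, rfl⟩), mem_Bn.2 (.inr ⟨p, q, ⟨fun h ↦ hne h.symm, hq⟩, rfl⟩)]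

lemma gr_eq_Bn_iff (h : Ψ ⊆ D.typeB.roots n) : Gr Ψ = Bn n ↔ IsFull Ψ := by
  refine ⟨fun hGr ↦ ⟨fun p ↦ hGr.ge (mem_Bn.2 (.inl ⟨p, rfl⟩)), fun {p q} hpq ↦
    hGr.ge (mem_Bn.2 (.inr ⟨p, q, hpq, rfl⟩))⟩, fun F ↦ (gr_subset_Bn h).antisymm ?_⟩
  rintro v hv
  obtain ⟨p, rfl⟩ | ⟨p, q, hpq, rfl⟩ := mem_Bn.1 hv
  exacts [F.exists_short p, F.exists_add hpq]

-- A sum involving a long root is short or has a translation in `D.long`.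
lemma IsClosedSystem.add_mem_gr_of_long (C : D.typeB.IsClosedSystem Ψ)
    (hshort : ∀ p, ∃ y, (ε p, y) ∈ Ψ) {p q : SignedIndex n} {β : E n}
    (hα : ε p + ε q ∈ Gr Ψ) (hβ : β ∈ Gr Ψ) (h : ε p + ε q + β ∈ Bn n) :
    ε p + ε q + β ∈ Gr Ψ := by
  have mem_gr (r) : ε r ∈ Gr Ψ := hshort r
  obtain ⟨y, hy⟩ := hα
  obtain ⟨z, hz⟩ := hβ
  obtain ⟨r, hr⟩ | ⟨r, s, hrs, hsum⟩ := mem_Bn.1 h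
  · exact hr ▸ mem_gr r
  obtain ⟨u, w, hu⟩ | ⟨u, t, w, hut⟩ := eq_of_mem_roots _ (C.subset hz)
  · obtain ⟨rfl, rfl⟩ := Prod.mk.inj hu
    have hBCn : ε p + ε q + ε u ∈ BCn n := hsum ▸ ε_add_ε_mem_BCn hrs.2
    obtain rfl | rfl := cancel_of_add_ε_mem_BCn (C.ne_neg hy) hBCn
    · simpa using mem_gr q
    · simpa using mem_gr p
  · obtain ⟨rfl, rfl⟩ := Prod.mk.inj hut
    refine ⟨y + z, C.add_mem _ hy _ hz ?_⟩
    rw [Prod.mk_add_mk, hsum]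
    exact D.typeB.add_mem_roots_of_ne hrs (D.long.add_mem (C.mem_long hy) (C.mem_long hz))

theorem extend_eq_union (hn : 2 ≤ n) (C : D.typeB.IsClosedSystem Ψ) (F : IsFull Ψ) :
    D.extend Ψ = Ψ ∪ ⋃ i : Fin n,
      ({x | x.1 = (2 : ℝ) • eps i ∧ x.2 ∈ (Zset Ψ (eps i - eps (nextIdx i)) +
          Zset Ψ (eps i + eps (nextIdx i))) ∩ D.div} ∪
        {x | x.1 = -((2 : ℝ) • eps i) ∧ x.2 ∈ (Zset Ψ (-eps i + eps (nextIdx i)) +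
          Zset Ψ (-eps i - eps (nextIdx i))) ∩ D.div}) := by
  refine congrArg (Ψ ∪ ·) (Set.ext fun x ↦ ?_)
  have forall_iff (p : SignedIndex n) (hd : x.2 ∈ D.div) :
      (∀ y, (ε p, y) ∈ Ψ → (ε p, x.2 - y) ∈ Ψ) ↔
        x.2 ∈ Zset Ψ (ε p + eps (nextIdx p.index)) + Zset Ψ (ε p - eps (nextIdx p.index)) := by
    let r : SignedIndex n := ⟨nextIdx p.index, 1⟩
    have hr : r ≠ p ∧ r ≠ -p := SignedIndex.index_ne_iff.1 (nextIdx_ne hn p.index).symm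
    rw [C.forall_sub_short_iff F hr (D.mem_long_of_mem_div hd)]
    simp [Set.mem_add, Zset, r, ε, sub_eq_add_neg]
  have exists_iff := exists_ε_iff (P := fun i w ↦ x.1 = w + w ∧ x.2 ∈
    (Zset Ψ (w + eps (nextIdx i)) + Zset Ψ (w - eps (nextIdx i))) ∩ D.div)
  calc
    x ∈ _ ↔ ∃ p : SignedIndex n, x.1 = ε p + ε p ∧ x.2 ∈
        (Zset Ψ (ε p + eps (nextIdx p.index)) + Zset Ψ (ε p - eps (nextIdx p.index))) ∩ D.div :=
      exists_congr fun p ↦ and_congr_right fun _ ↦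
        and_comm.trans (and_congr_left fun hd ↦ forall_iff p hd)
    _ ↔ _ := exists_iff
    _ ↔ _ := by
      simp only [Set.mem_iUnion, Set.mem_union, Set.mem_ofPred_eq, two_smul, neg_add,
        add_comm (Zset Ψ (eps _ + _))]

end Group

variable {D : BCDatum Y} {n : ℕ} {Ψ : Set (E n × Y)}

lemma IsClosedSystem.reflRoot_mem_gr (C : D.IsClosedSystem Ψ) {α β : E n} (hα : α ∈ Gr Ψ)
    (hβ : β ∈ Gr Ψ) : reflRoot α β ∈ Gr Ψ := by
  obtain ⟨y, hy⟩ := hα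
  obtain ⟨z, hz⟩ := hβ
  exact ⟨_, C.reflAff_mem hy hz⟩

theorem isSemiClosedSubRS_gr (C : D.typeB.IsClosedSystem Ψ) (hshort : ∀ p, ∃ y, (ε p, y) ∈ Ψ)
    {p q : SignedIndex n} (hpq : q ≠ p ∧ q ≠ -p) (h : ∀ l, (ε p + ε q, l) ∉ Ψ) :
    IsSemiClosedSubRS (Bn n) (shortBC n) (longBC n) ∅ (Gr Ψ) := by
  refine ⟨⟨⟨ε p, hshort p⟩, gr_subset_Bn C.subset, fun _ hα _ ↦ C.reflRoot_mem_gr hα⟩,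
    fun hclosed ↦ ?_, fun α hα β hβ hBn hGr ↦ .inl ?_⟩
  · obtain ⟨l, hl⟩ := hclosed _ (hshort p) _ (hshort q) (mem_Bn.2 (.inr ⟨p, q, hpq, rfl⟩))
    exact h l hl
  · have mem_short {α β} (hα : α ∈ Gr Ψ) (hβ : β ∈ Gr Ψ) (hBn : α + β ∈ Bn n)
        (hGr : α + β ∉ Gr Ψ) : α ∈ shortBC n := by
      refine (gr_subset_Bn C.subset hα).resolve_right fun hlong ↦ hGr ?_
      obtain ⟨r, s, -, rfl⟩ := mem_longBC.1 hlong
      exact C.add_mem_gr_of_long hshort hα hβ hBn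
    refine ⟨mem_short hα hβ hBn hGr, mem_short hβ hα (add_comm α β ▸ hBn) (add_comm α β ▸ hGr),
      .inl (hBn.resolve_left fun hs ↦ hGr ?_)⟩
    obtain ⟨r, hr⟩ := mem_shortBC.1 hs
    exact hr ▸ hshort r

theorem maximal_iff (hn : 2 ≤ n) : Maximal D.IsProperClosed Ψ ↔
    (∃ J : Set (Fin n), J ≠ Set.univ ∧ (D.short ≠ D.long → J ≠ ∅) ∧ Ψ = D.colored J Set.univ) ∨
    (∃ Ψ', Maximal D.typeB.IsProperClosed Ψ' ∧
      IsSemiClosedSubRS (Bn n) (shortBC n) (longBC n) ∅ (Gr Ψ') ∧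
      Ψ = Ψ' ∪ {x | x.1 ∈ divBC n ∧ x.2 ∈ D.div}) ∨
    ∃ Ψ', Maximal D.typeB.IsProperClosed Ψ' ∧ Gr Ψ' = Bn n ∧ Ψ = D.extend Ψ' := by
  constructor
  · intro M
    have C := M.prop.2.1
    by_cases hshort : ∀ p, ∃ y, (ε p, y) ∈ Ψ
    swap
    · push Not at hshort
      obtain ⟨p, hp⟩ := hshort
      exact .inl (eq_colored_of_maximal_of_no_short M hp)
    have hshort' (p) : ∃ y, (ε p, y) ∈ Ψ ∩ D.typeB.roots n :=
      (hshort p).imp fun y hy ↦ ⟨hy, D.typeB.ε_mem_roots.2 (C.mem_short hy)⟩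
    refine .inr ?_
    by_cases hadd : ∀ p q : SignedIndex n, q ≠ p ∧ q ≠ -p → ∃ l, (ε p + ε q, l) ∈ Ψ
    · have F : IsFull (Ψ ∩ D.typeB.roots n) := ⟨hshort', fun hpq ↦
        (hadd _ _ hpq).imp fun l hl ↦ ⟨hl, D.typeB.add_mem_roots_of_ne hpq (C.mem_long hl)⟩⟩
      exact .inr ⟨_, maximal_inter_typeB_roots hn M F,
        (gr_eq_Bn_iff Set.inter_subset_right).2 F, extend_inter_typeB_roots_eq_of_maximal hn M F⟩
    · push Not at hadd
      obtain ⟨p, q, hpq, h⟩ := hadd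
      obtain ⟨y, hp⟩ := hshort p
      obtain ⟨I, P, hI, hI', rfl⟩ := eq_colored_of_maximal_of_no_add M hp hpq h
      refine .inl ⟨D.typeB.colored I P, maximal_colored (D := D.typeB) hI hI' P, ?_,
        D.colored_eq_union I P⟩
      rw [← colored_inter_typeB_roots]
      exact isSemiClosedSubRS_gr C.inter_typeB_roots hshort' hpq fun l hl ↦ h l hl.1
  · rintro (⟨J, hJ, hJ', rfl⟩ | ⟨Ψ', M, hsemi, rfl⟩ | ⟨Ψ', M, hGr, rfl⟩)
    · by_cases hne : J.Nonempty
      · exact maximal_colored hne hJ _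
      · obtain rfl := Set.not_nonempty_iff_eq_empty.1 hne
        exact maximal_colored_empty_univ hn (not_not.1 fun h ↦ hJ' h rfl)
    · obtain ⟨p, q, y, hpq, hp, h⟩ := exists_no_add_of_isSemiClosedSubRS hsemi
      obtain ⟨I, P, hI, hI', rfl⟩ := eq_colored_of_maximal_of_no_add M hp hpq h
      rw [← D.colored_eq_union I P]
      exact maximal_colored (D := D) hI hI' P
    · exact maximal_extend hn M ((gr_eq_Bn_iff M.prop.2.1.subset).1 hGr)

end BCDatum

/-! ### From translation sets to data -/

section PhiRe

variable {G : Type*} {n : ℕ} {p q : SignedIndex n} {y : G} {Λ : E n → Set G}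
  {Λs Λl Λd : Set G}

/-- The translation sets `Λ_α` depend only on the length of `α`: they take the common values `Λs`
on the short roots, `Λl` on the long ones and `Λd` on the divisible ones. -/
structure HasCommonValues (Λ : E n → Set G) (Λs Λl Λd : Set G) : Prop where
  short_eq : ∀ α ∈ shortBC n, Λ α = Λs
  long_eq : ∀ α ∈ longBC n, Λ α = Λl
  div_eq : ∀ α ∈ divBC n, Λ α = Λd

namespace HasCommonValues

lemma mem_ε_iff (h : HasCommonValues Λ Λs Λl Λd) : y ∈ Λ (ε p) ↔ y ∈ Λs := by
  rw [h.short_eq _ (mem_shortBC.2 ⟨p, rfl⟩)]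

lemma mem_ε_add_iff (h : HasCommonValues Λ Λs Λl Λd) (hpq : q ≠ p ∧ q ≠ -p) :
    y ∈ Λ (ε p + ε q) ↔ y ∈ Λl := by
  rw [h.long_eq _ (ε_add_ε_mem_longBC.2 hpq)]

lemma mem_ε_add_self_iff (h : HasCommonValues Λ Λs Λl Λd) : y ∈ Λ (ε p + ε p) ↔ y ∈ Λd := by
  rw [h.div_eq _ (mem_divBC.2 ⟨p, rfl⟩)]

variable [AddCommGroup G] {D : BCDatum G}

lemma lift_AJ_eq (h : HasCommonValues Λ D.short D.long D.div) (J : Set (Fin n)) :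
    {x | x.1 ∈ AJ n J ∧ x.2 ∈ Λ x.1} = D.colored J Set.univ := by
  have mem_add_iff {p q : SignedIndex n} {y : G} (hq : q ≠ -p) :
      y ∈ Λ (ε p + ε q) ↔ y ∈ D.long ∧ (p = q → y ∈ D.div) := by
    obtain rfl | hpq := eq_or_ne q p
    · simpa [h.mem_ε_add_self_iff] using D.mem_long_of_mem_div
    · simp [h.mem_ε_add_iff ⟨hpq, hq⟩, hpq.symm]
  ext ⟨v, y⟩
  constructor
  · rintro ⟨hv, hy⟩
    obtain ⟨p, rfl, hp⟩ | ⟨p, q, hq, rfl, hpq⟩ := mem_AJ.1 hv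
    · exact D.ε_mem_colored.2 ⟨h.mem_ε_iff.1 hy, by simpa using hp⟩
    · exact D.ε_add_mem_colored.2 ⟨hq, (mem_add_iff hq).1 hy, hpq⟩
  · rintro (⟨p, rfl, hy, hp⟩ | ⟨p, q, hq, rfl, hy, hpq⟩)
    · exact ⟨mem_AJ.2 (.inl ⟨p, rfl, by simpa using hp⟩), h.mem_ε_iff.2 hy⟩
    · exact ⟨mem_AJ.2 (.inr ⟨p, q, hq, rfl, hpq⟩), (mem_add_iff hq).2 hy⟩

lemma PhiRe_BCn_eq (h : HasCommonValues Λ D.short D.long D.div) :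
    PhiRe (BCn n) Λ = D.roots n := by
  rw [← AJ_univ, ← D.colored_univ_univ]
  exact h.lift_AJ_eq Set.univ

lemma PhiRe_Bn_eq (h : HasCommonValues Λ D.short D.long D.div) :
    PhiRe (Bn n) Λ = D.typeB.roots n := by
  ext ⟨v, y⟩
  constructor
  · rintro ⟨hv, hy⟩
    obtain ⟨p, rfl⟩ | ⟨p, q, hpq, rfl⟩ := mem_Bn.1 hv
    · exact D.typeB.ε_mem_roots.2 (h.mem_ε_iff.1 hy)
    · exact D.typeB.add_mem_roots_of_ne hpq ((h.mem_ε_add_iff hpq).1 hy)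
  · rintro (⟨p, rfl, hy⟩ | ⟨p, q, hq, rfl, hy, hd⟩)
    · exact ⟨mem_Bn.2 (.inl ⟨p, rfl⟩), h.mem_ε_iff.2 hy⟩
    · have hpq : q ≠ p ∧ q ≠ -p := ⟨fun h ↦ hd h.symm, hq⟩
      exact ⟨mem_Bn.2 (.inr ⟨p, q, hpq, rfl⟩), (h.mem_ε_add_iff hpq).2 hy⟩

lemma exists_bcDatum [Module ℝ G] (hn : 2 ≤ n) {Λl : AddSubgroup G}
    (h : HasCommonValues Λ Λs Λl Λd)
    (hΛ : ∀ α ∈ BCn n, ∀ β ∈ BCn n, ∀ z ∈ Λ α, ∀ y ∈ Λ β,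
      y - pairing β α • z ∈ Λ (reflRoot α β))
    (h0 : 0 ∈ Λs) :
    ∃ D : BCDatum G, D.short = Λs ∧ D.long = Λl ∧ D.div = Λd := by
  let p : SignedIndex n := ⟨⟨0, by lia⟩, 1⟩
  obtain ⟨q, hpq⟩ := p.exists_index_ne hn
  have hnpq : q ≠ -p ∧ q ≠ -(-p) := by rw [neg_neg]; exact hpq.symm
  have reflect {α β : E n} {c : ℝ} (hα : α ∈ BCn n) (hβ : β ∈ BCn n) (hc : pairing β α = c)
      {z y : G} (hz : z ∈ Λ α) (hy : y ∈ Λ β) : y - c • z ∈ Λ (β - c • α) := by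
    simpa only [reflRoot, hc] using hΛ α hα β hβ z hz y hy
  have hpq_mem : ε p + ε q ∈ BCn n := ε_add_ε_mem_BCn hpq.2
  have hpp_mem : ε p + ε p ∈ BCn n := ε_add_ε_mem_BCn p.ne_neg_self
  refine ⟨⟨Λs, Λl, Λd, h0, fun {y l} hy hl ↦ ?_, fun {y} hy ↦ ?_, fun d hd ↦ ?_,
    fun {d l} hd hl ↦ ?_⟩, rfl, rfl, rfl⟩
  · have := reflect hpq_mem (ε_mem_BCn p) (pairing_ε_add_left hpq.2)
      ((h.mem_ε_add_iff hpq).2 (neg_mem hl)) (h.mem_ε_iff.2 hy)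
    rw [← h.mem_ε_iff (p := -q)]
    simpa using this
  · have := reflect (ε_mem_BCn p) hpq_mem (pairing_ε_add_ε_left hpq) (h.mem_ε_iff.2 hy)
      ((h.mem_ε_add_iff hpq).2 (zero_mem Λl))
    rw [show ε p + ε q - (2 : ℝ) • ε p = ε (-p) + ε q by rw [ε_neg]; module,
      h.mem_ε_add_iff hnpq, zero_sub, SetLike.mem_coe, neg_mem_iff, two_smul] at this
    rwa [two_nsmul]
  · have := reflect hpp_mem hpq_mem (pairing_ε_add_self_right hpq)
      (h.mem_ε_add_self_iff.2 hd) ((h.mem_ε_add_iff hpq).2 (zero_mem Λl))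
    rwa [show ε p + ε q - (1 : ℝ) • (ε p + ε p) = ε (-p) + ε q by rw [ε_neg]; module,
      h.mem_ε_add_iff hnpq, zero_sub, one_smul, SetLike.mem_coe, neg_mem_iff] at this
  · have := reflect hpq_mem hpp_mem (pairing_ε_add_self_left hpq.2)
      ((h.mem_ε_add_iff hpq).2 hl) (h.mem_ε_add_self_iff.2 hd)
    rw [show ε p + ε p - (2 : ℝ) • (ε p + ε q) = ε (-q) + ε (-q) by rw [ε_neg]; module,
      h.mem_ε_add_self_iff, two_smul] at this
    rwa [two_nsmul]

end HasCommonValues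

end PhiRe

theorem statement16_general {Y : Type*} [AddCommGroup Y] [Module ℝ Y] {n : ℕ} (hn : 2 ≤ n)
    (Λ : E n → Set Y) (Λs Λd : Set Y) (Λl : AddSubgroup Y)
    (hΛ : ∀ α ∈ BCn n, ∀ β ∈ BCn n, ∀ z ∈ Λ α, ∀ y ∈ Λ β,
      y - pairing β α • z ∈ Λ (reflRoot α β))
    (hs : ∀ α ∈ shortBC n, Λ α = Λs) (hl : ∀ α ∈ longBC n, Λ α = (Λl : Set Y))
    (hd : ∀ α ∈ divBC n, Λ α = Λd) (h0 : 0 ∈ Λs) (Ψ : Set (E n × Y)) :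
    IsMaxClosedSubSys (PhiRe (BCn n) Λ) Ψ ↔
      (∃ J : Set (Fin n), J ≠ Set.univ ∧ (Λs ≠ (Λl : Set Y) → J ≠ ∅) ∧
        Ψ = {x | x.1 ∈ AJ n J ∧ x.2 ∈ Λ x.1}) ∨
      (∃ Ψ' : Set (E n × Y), IsMaxClosedSubSys (PhiRe (Bn n) Λ) Ψ' ∧
        IsSemiClosedSubRS (Bn n) (shortBC n) (longBC n) ∅ (Gr Ψ') ∧
        Ψ = Ψ' ∪ {x | x.1 ∈ divBC n ∧ x.2 ∈ Λd}) ∨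
      (∃ Ψ' : Set (E n × Y), IsMaxClosedSubSys (PhiRe (Bn n) Λ) Ψ' ∧
        Gr Ψ' = Bn n ∧
        Ψ = Ψ' ∪ ⋃ i : Fin n,
          ({x | x.1 = (2:ℝ) • eps i ∧
              x.2 ∈ (Zset Ψ' (eps i - eps (nextIdx i)) +
                Zset Ψ' (eps i + eps (nextIdx i))) ∩ Λd} ∪
           {x | x.1 = -((2:ℝ) • eps i) ∧
              x.2 ∈ (Zset Ψ' (-eps i + eps (nextIdx i)) +
                Zset Ψ' (-eps i - eps (nextIdx i))) ∩ Λd})) := by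
  have h : HasCommonValues Λ Λs Λl Λd := ⟨hs, hl, hd⟩
  obtain ⟨D, rfl, rfl, rfl⟩ := h.exists_bcDatum hn hΛ h0
  simp only [h.PhiRe_BCn_eq, h.PhiRe_Bn_eq, h.lift_AJ_eq, D.isMaxClosedSubSys_iff,
    D.typeB.isMaxClosedSubSys_iff]
  refine (D.maximal_iff hn).trans <| or_congr_right <| or_congr_right <| exists_congr fun Ψ' ↦
    and_congr_right fun M ↦ and_congr_right fun hGr ↦ ?_
  have C := M.prop.2.1
  rw [D.extend_eq_union hn C ((BCDatum.gr_eq_Bn_iff C.subset).1 hGr)]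

/-- Theorem 7.1: classification of the maximal closed subroot systems in type
`BC_n`, `n ≥ 2`. -/
theorem statement16 {Y : Type*} [AddCommGroup Y] [Module ℝ Y] [FiniteDimensional ℝ Y]
    {n : ℕ} (hn : 2 ≤ n) (Λ : E n → Set Y) (Λs Λd : Set Y) (Λl : AddSubgroup Y)
    (hED : IsExtensionDatum (BCn n) Λ)
    (hs : ∀ α ∈ shortBC n, Λ α = Λs) (hl : ∀ α ∈ longBC n, Λ α = (Λl : Set Y))
    (hd : ∀ α ∈ divBC n, Λ α = Λd)
    (hdl : Λd ⊆ (Λl : Set Y)) (hls : (Λl : Set Y) ⊆ Λs)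
    (Ψ : Set (E n × Y)) :
    IsMaxClosedSubSys (PhiRe (BCn n) Λ) Ψ ↔
      (∃ J : Set (Fin n), J ≠ Set.univ ∧ (Λs ≠ (Λl : Set Y) → J ≠ ∅) ∧
        Ψ = {x | x.1 ∈ AJ n J ∧ x.2 ∈ Λ x.1}) ∨
      (∃ Ψ' : Set (E n × Y), IsMaxClosedSubSys (PhiRe (Bn n) Λ) Ψ' ∧
        IsSemiClosedSubRS (Bn n) (shortBC n) (longBC n) ∅ (Gr Ψ') ∧
        Ψ = Ψ' ∪ {x | x.1 ∈ divBC n ∧ x.2 ∈ Λd}) ∨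
      (∃ Ψ' : Set (E n × Y), IsMaxClosedSubSys (PhiRe (Bn n) Λ) Ψ' ∧
        Gr Ψ' = Bn n ∧
        Ψ = Ψ' ∪ ⋃ i : Fin n,
          ({x | x.1 = (2:ℝ) • eps i ∧
              x.2 ∈ (Zset Ψ' (eps i - eps (nextIdx i)) +
                Zset Ψ' (eps i + eps (nextIdx i))) ∩ Λd} ∪
           {x | x.1 = -((2:ℝ) • eps i) ∧
              x.2 ∈ (Zset Ψ' (-eps i + eps (nextIdx i)) +
                Zset Ψ' (-eps i - eps (nextIdx i))) ∩ Λd})) :=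
  statement16_general hn Λ Λs Λd Λl hED.1 hs hl hd (hls Λl.zero_mem) Ψ

end BdS

end
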